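/- Theorem 3.3: Let 𝕄 be an infinite subset of ℕ, let Ω ⊆ ℂⁿ be an open convex set, let ζ be a point of the closure of Ω, and let (N_j)_{j≥0} be any enumeration of ℕⁿ. Then there exists f ∈ A^∞(Ω) such that: for every compact convex set K ⊆ ℂⁿ disjoint from the closure of Ω and every holomorphic polynomial P on ℂⁿ, there exists a sequence (λ_N)_{N≥1} with λ_N ∈ 𝕄 such that S_{λ_N}(f,ζ) → P uniformly on K as N → ∞, and for every multi-index ℓ ∈ ℕⁿ, D^ℓ[S_{λ_N}(f,ζ)] → D^ℓ f uniformly on each compact subset of the closure of Ω as N → ∞ (here D^ℓ f denotes the continuous extension to the closure). The set of all such functions f is a dense G_δ subset of A^∞(Ω). -/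

import Mathlib

open Set Filter Topology

noncomputable section

/-- Evaluation of a multivariate polynomial as a function on `ℂⁿ = Fin n → ℂ`. -/
def mvEval {n : ℕ} (p : MvPolynomial (Fin n) ℂ) : (Fin n → ℂ) → ℂ :=
  fun z => MvPolynomial.eval z p

/-- The polynomially convex hull of a set in `ℂⁿ`. -/
def polyHull {n : ℕ} (K : Set (Fin n → ℂ)) : Set (Fin n → ℂ) :=
  {z | ∀ p : MvPolynomial (Fin n) ℂ, ‖mvEval p z‖ ≤ sSup ((fun w => ‖mvEval p w‖) '' K)}

/-- A set in `ℂⁿ` is polynomially convex if it equals its polynomially convex hull. -/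
def IsPolyConvex {n : ℕ} (K : Set (Fin n → ℂ)) : Prop := polyHull K = K

/-- The polynomially convex hull of a subset of `ℂ`. -/
def polyHull1 (F : Set ℂ) : Set ℂ :=
  {z | ∀ p : Polynomial ℂ, ‖p.eval z‖ ≤ sSup ((fun w => ‖p.eval w‖) '' F)}

/-- A subset of `ℂ` is polynomially convex if it equals its polynomially convex hull. -/
def IsPolyConvex1 (F : Set ℂ) : Prop := polyHull1 F = F

/-- Partial derivative in the `i`-th coordinate direction. -/
def pd {n : ℕ} (i : Fin n) (f : (Fin n → ℂ) → ℂ) : (Fin n → ℂ) → ℂ :=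
  fun z => fderiv ℂ f z (Pi.single i 1)

/-- Iterated partial derivative `D^ℓ = ∂^{ℓ₁+⋯+ℓₙ}/∂z₁^{ℓ₁}⋯∂zₙ^{ℓₙ}`. -/
def Dml {n : ℕ} (ℓ : Fin n → ℕ) (f : (Fin n → ℂ) → ℂ) : (Fin n → ℂ) → ℂ :=
  (List.finRange n).foldr (fun i g => (pd i)^[ℓ i] g) f

/-- Partial sums `S_λ` of a Taylor-type series around `ζ`, with coefficients computed from a
given family `g` of (extended) partial derivatives: the coefficient of the monomial
`(z-ζ)^{N_j}` is `g (N_j) ζ / (N_{j,1}! ⋯ N_{j,n}!)`. -/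
def pSumExt {n : ℕ} (Nj : ℕ → Fin n → ℕ) (g : (Fin n → ℕ) → (Fin n → ℂ) → ℂ)
    (ζ : Fin n → ℂ) (lam : ℕ) : (Fin n → ℂ) → ℂ :=
  fun z => ∑ j ∈ Finset.range (lam + 1),
    (((∏ i, Nat.factorial (Nj j i) : ℕ) : ℂ))⁻¹ * g (Nj j) ζ * ∏ i, (z i - ζ i) ^ (Nj j i)

/-- Partial sums `S_λ(f,ζ)` of the Taylor development of `f` around `ζ`. -/
def pSum {n : ℕ} (Nj : ℕ → Fin n → ℕ) (f : (Fin n → ℂ) → ℂ)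
    (ζ : Fin n → ℂ) (lam : ℕ) : (Fin n → ℂ) → ℂ :=
  pSumExt Nj (fun ℓ => Dml ℓ f) ζ lam

/-- The space `O(Ω)` of holomorphic functions on `Ω`. -/
def Ospace (n : ℕ) (Ω : Set (Fin n → ℂ)) : Type :=
  {f : (Fin n → ℂ) → ℂ // DifferentiableOn ℂ f Ω}

/-- Topology of uniform convergence on compact subsets of `Ω` on `O(Ω)` (the compact-open
topology induced via restriction to `Ω`). -/
instance (n : ℕ) (Ω : Set (Fin n → ℂ)) : TopologicalSpace (Ospace n Ω) :=
  TopologicalSpace.induced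
    (fun f : Ospace n Ω =>
      (⟨Ω.restrict f.1, continuousOn_iff_continuous_restrict.mp f.2.continuousOn⟩ : C(Ω, ℂ)))
    inferInstance

/-- Membership in `A^∞(Ω)`: `f` is holomorphic on `Ω` and each partial derivative `D^ℓ f`
extends continuously to the closure of `Ω`. -/
def AinfMem (n : ℕ) (Ω : Set (Fin n → ℂ)) (f : (Fin n → ℂ) → ℂ) : Prop :=
  DifferentiableOn ℂ f Ω ∧
    ∀ ℓ : Fin n → ℕ, ∃ g : (Fin n → ℂ) → ℂ,
      ContinuousOn g (closure Ω) ∧ Set.EqOn g (Dml ℓ f) Ω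

/-- The space `A^∞(Ω)`. -/
def AinfSpace (n : ℕ) (Ω : Set (Fin n → ℂ)) : Type :=
  {f : (Fin n → ℂ) → ℂ // AinfMem n Ω f}

/-- The chosen continuous extension of `D^ℓ f` to the closure of `Ω`, for `f ∈ A^∞(Ω)`.
(Its restriction to the closure of `Ω` is uniquely determined.) -/
def AinfExt {n : ℕ} {Ω : Set (Fin n → ℂ)} (f : AinfSpace n Ω) (ℓ : Fin n → ℕ) :
    (Fin n → ℂ) → ℂ :=
  Classical.choose (f.2.2 ℓ)

lemma AinfExt_continuousOn {n : ℕ} {Ω : Set (Fin n → ℂ)} (f : AinfSpace n Ω) (ℓ : Fin n → ℕ) :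
    ContinuousOn (AinfExt f ℓ) (closure Ω) :=
  (Classical.choose_spec (f.2.2 ℓ)).1

lemma AinfExt_eqOn {n : ℕ} {Ω : Set (Fin n → ℂ)} (f : AinfSpace n Ω) (ℓ : Fin n → ℕ) :
    Set.EqOn (AinfExt f ℓ) (Dml ℓ f.1) Ω :=
  (Classical.choose_spec (f.2.2 ℓ)).2

/-- Topology on `A^∞(Ω)`: uniform convergence of every partial derivative on every compact
subset of the closure of `Ω`. -/
instance (n : ℕ) (Ω : Set (Fin n → ℂ)) : TopologicalSpace (AinfSpace n Ω) :=
  TopologicalSpace.induced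
    (fun f : AinfSpace n Ω => fun ℓ : Fin n → ℕ =>
      (⟨(closure Ω).restrict (AinfExt f ℓ),
        continuousOn_iff_continuous_restrict.mp (AinfExt_continuousOn f ℓ)⟩ :
          C(closure Ω, ℂ)))
    inferInstance

/-- A smooth compact curve in `ℂⁿ`: the image of an injective `C^∞` map with
nowhere-vanishing derivative, defined on a compact interval (an arc) or on the
circle (a closed curve, modelled by a 1-periodic map). -/
def IsSmoothCompactCurve {n : ℕ} (K : Set (Fin n → ℂ)) : Prop :=
  ∃ γ : ℝ → (Fin n → ℂ), ContDiff ℝ (⊤ : ℕ∞) γ ∧ (∀ t, deriv γ t ≠ 0) ∧ K = γ '' Set.Icc 0 1 ∧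
    (Set.InjOn γ (Set.Icc 0 1) ∨ (Function.Periodic γ 1 ∧ Set.InjOn γ (Set.Ico 0 1)))

/-- A disjoint union of finitely many smooth compact curves. -/
def IsFiniteUnionOfSmoothCurves {n : ℕ} (K : Set (Fin n → ℂ)) : Prop :=
  ∃ (m : ℕ) (C : Fin m → Set (Fin n → ℂ)),
    (∀ i, IsSmoothCompactCurve (C i)) ∧ Pairwise (Function.onFun Disjoint C) ∧ K = ⋃ i, C i


section
variable {n : ℕ}

lemma norm_fderiv_le_of_ball {f : (Fin n → ℂ) → ℂ} {z : Fin n → ℂ} {r M : ℝ} (hr : 0 < r)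
    (hf : ∀ w ∈ Metric.closedBall z r, DifferentiableAt ℂ f w)
    (hM : ∀ w ∈ Metric.closedBall z r, ‖f w‖ ≤ M) : ‖fderiv ℂ f z‖ ≤ M / r := by
  have hM0 : 0 ≤ M := (norm_nonneg _).trans (hM z (Metric.mem_closedBall_self hr.le))
  refine ContinuousLinearMap.opNorm_le_bound _ (by positivity) fun v => ?_
  rcases eq_or_ne v 0 with rfl | hv
  · simp
  have hv' : 0 < ‖v‖ := norm_pos_iff.mpr hv
  -- work on the complex line through z in direction v
  set g : ℂ → ℂ := fun t => f (z + t • v) with hg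
  have hmem : ∀ t : ℂ, ‖t‖ ≤ r / ‖v‖ → z + t • v ∈ Metric.closedBall z r := by
    intro t ht
    rw [mem_closedBall_iff_norm]
    simp only [add_sub_cancel_left, norm_smul]
    rwa [le_div_iff₀ hv'] at ht
  have hgd : ∀ t : ℂ, ‖t‖ ≤ r / ‖v‖ → HasDerivAt g (fderiv ℂ f (z + t • v) v) t := by
    intro t ht
    have h1 := (hf _ (hmem t ht)).hasFDerivAt
    have h2 : HasDerivAt (fun t : ℂ => z + t • v) v t := by
      simpa using ((hasDerivAt_id t).smul_const v).const_add z
    exact h1.comp_hasDerivAt t h2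
  have h0 := hgd 0 (by simp; positivity)
  have := Complex.norm_deriv_le_of_forall_mem_sphere_norm_le (f := g) (c := 0) (R := r / ‖v‖)
    (C := M) (by positivity) ?_ ?_
  · rw [h0.deriv] at this
    simp only [zero_smul, add_zero] at this
    calc _ ≤ _ := this
      _ = _ := by field_simp
  · apply DifferentiableOn.diffContOnCl_ball (U := Metric.closedBall 0 (r / ‖v‖))
    · intro t ht
      exact (hgd t (by simpa using ht)).differentiableAt.differentiableWithinAt
    · exact subset_rfl
  · intro t ht
    exact hM _ (hmem t (by simp at ht; exact ht.le))

lemma pd_eq_circle {f : (Fin n → ℂ) → ℂ} {z : Fin n → ℂ} {r : ℝ} (hr : 0 < r) (i : Fin n)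
    (hf : ∀ w ∈ Metric.ball z (2 * r), DifferentiableAt ℂ f w) :
    pd i f z = (2 * Real.pi * Complex.I : ℂ)⁻¹ • ∮ w in C(0, r), ((w - 0) ^ 2)⁻¹ •
      f (z + w • Pi.single i 1) := by
  set v : Fin n → ℂ := Pi.single i 1
  have hv : ‖v‖ = 1 := by simp [v, Pi.norm_single]
  have hmem : ∀ t : ℂ, ‖t‖ < 2 * r → z + t • v ∈ Metric.ball z (2 * r) := by
    intro t ht
    rw [mem_ball_iff_norm]
    simp only [add_sub_cancel_left, norm_smul, hv, mul_one]
    exact ht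
  have hgd : ∀ t : ℂ, ‖t‖ < 2 * r →
      HasDerivAt (fun t : ℂ => f (z + t • v)) (fderiv ℂ f (z + t • v) v) t := by
    intro t ht
    have h1 := (hf _ (hmem t ht)).hasFDerivAt
    have h2 : HasDerivAt (fun t : ℂ => z + t • v) v t := by
      simpa using ((hasDerivAt_id t).smul_const v).const_add z
    exact h1.comp_hasDerivAt t h2
  rw [Complex.two_pi_I_inv_smul_circleIntegral_sub_sq_inv_smul_of_differentiable
    (U := Metric.ball 0 (2 * r)) Metric.isOpen_ball (c := 0) (w₀ := 0) (R := r)]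
  · rw [(hgd 0 (by simp [hr])).deriv]
    simp [pd, v]
  · intro t ht
    simp at ht ⊢
    linarith
  · intro t ht
    exact (hgd t (by simpa using ht)).differentiableAt.differentiableWithinAt
  · simp [hr]

/-- Holomorphic functions of several variables have holomorphic partial derivatives. -/
lemma pd_differentiableOn {f : (Fin n → ℂ) → ℂ} {U : Set (Fin n → ℂ)} (hU : IsOpen U)
    (hf : DifferentiableOn ℂ f U) (i : Fin n) : DifferentiableOn ℂ (pd i f) U := by
  intro z0 hz0
  obtain ⟨ρ, hρ, hball⟩ := Metric.isOpen_iff.mp hU z0 hz0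
  set r := ρ / 8 with hr
  have hr0 : 0 < r := by positivity
  have hfd : ∀ w ∈ Metric.ball z0 ρ, DifferentiableAt ℂ f w := fun w hw =>
    hf.differentiableAt (hU.mem_nhds (hball hw))
  have hcomp : IsCompact (Metric.closedBall z0 (4 * r)) := isCompact_closedBall _ _
  obtain ⟨M, hM⟩ := hcomp.exists_bound_of_continuousOn (f := f)
    (fun w hw => (hfd w (by simp at hw ⊢; linarith)).continuousAt.continuousWithinAt)
  have hM0 : 0 ≤ M := (norm_nonneg _).trans (hM z0 (by simp; positivity))
  have hfder : ∀ w ∈ Metric.ball z0 (3 * r), ‖fderiv ℂ f w‖ ≤ M / r := by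
    intro w hw
    have hsub : Metric.closedBall w r ⊆ Metric.closedBall z0 (4 * r) :=
      Metric.closedBall_subset_closedBall' (by simp at hw; linarith)
    exact norm_fderiv_le_of_ball hr0 (fun y hy => hfd y (by
      have := hsub hy; simp at this ⊢; linarith)) fun y hy => hM y (hsub hy)
  have hlip : LipschitzOnWith (Real.toNNReal (M / r)) f (Metric.ball z0 (3 * r)) := by
    apply (convex_ball z0 (3 * r)).lipschitzOnWith_of_nnnorm_fderiv_le (𝕜 := ℂ)
    · intro x hx; exact hfd x (by simp at hx ⊢; linarith)
    · intro x hx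
      rw [← NNReal.coe_le_coe, coe_nnnorm, Real.coe_toNNReal _ (by positivity)]
      exact hfder x hx
  set v : Fin n → ℂ := Pi.single i 1 with hvdef
  have hv : ‖v‖ = 1 := by simp [v, Pi.norm_single]
  have hmem : ∀ z ∈ Metric.ball z0 r, ∀ t : ℝ, z + circleMap 0 r t • v ∈
      Metric.ball z0 (3 * r) := by
    intro z hz t
    rw [mem_ball_iff_norm] at hz ⊢
    calc ‖z + circleMap 0 r t • v - z0‖ = ‖(z - z0) + circleMap 0 r t • v‖ := by congr 1; abel
      _ ≤ ‖z - z0‖ + ‖circleMap 0 r t • v‖ := norm_add_le _ _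
      _ < 3 * r := by
        rw [norm_smul, hv, norm_circleMap_zero, abs_of_pos hr0]; linarith
  have hev : pd i f =ᶠ[𝓝 z0] fun z => (2 * Real.pi * Complex.I : ℂ)⁻¹ •
      ∫ t in (0 : ℝ)..2 * Real.pi, deriv (circleMap 0 r) t • (((circleMap 0 r t - 0) ^ 2)⁻¹ •
      f (z + circleMap 0 r t • v)) := by
    filter_upwards [Metric.ball_mem_nhds z0 hr0] with z hz
    rw [pd_eq_circle hr0]
    · rfl
    · intro w hw
      refine hfd w ?_
      simp only [Metric.mem_ball] at hw hz ⊢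
      linarith [dist_triangle w z z0]
  refine DifferentiableAt.differentiableWithinAt ?_
  refine DifferentiableAt.congr_of_eventuallyEq ?_ hev
  refine DifferentiableAt.fun_const_smul ?_ _
  set c : ℝ → ℂ := fun t => deriv (circleMap 0 r) t * ((circleMap 0 r t - 0) ^ 2)⁻¹ with hc
  have hcc : Continuous c := by
    have : c = fun t => (circleMap 0 r t * Complex.I) * ((circleMap 0 r t - 0) ^ 2)⁻¹ := by
      ext t; simp [hc]
    rw [this]
    refine (by fun_prop : Continuous fun t => circleMap 0 r t * Complex.I).mul
      (Continuous.inv₀ (by fun_prop) ?_)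
    intro t
    simp [hr0.ne']
  have hmeas : Measurable fun t : ℝ => z0 + circleMap 0 r t • v :=
    (by fun_prop : Continuous fun t : ℝ => z0 + circleMap 0 r t • v).measurable
  have hcont : ∀ z ∈ Metric.ball z0 r, Continuous fun t : ℝ => c t * f (z + circleMap 0 r t • v) := by
    intro z hz
    refine hcc.mul ?_
    have h1 : Continuous fun t : ℝ => z + circleMap 0 r t • v := by fun_prop
    exact hlip.continuousOn.comp_continuous h1 (hmem z hz)
  have key := intervalIntegral.hasFDerivAt_integral_of_dominated_loc_of_lip (𝕜 := ℂ)
    (μ := MeasureTheory.volume)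
    (F := fun z t => c t * f (z + circleMap 0 r t • v)) (x₀ := z0) (a := 0) (b := 2 * Real.pi)
    (F' := fun t => c t • fderiv ℂ f (z0 + circleMap 0 r t • v))
    (s := Metric.ball z0 r) (bound := fun t => ‖c t‖ * (M / r)) (Metric.ball_mem_nhds z0 hr0)
    ?_ ?_ ?_ ?_ ?_ ?_
  · have := key.2.differentiableAt
    simpa only [hc, mul_assoc, smul_eq_mul] using this
  · filter_upwards [Metric.ball_mem_nhds z0 hr0] with z hz
    exact (hcont z hz).aestronglyMeasurable
  · exact (hcont z0 (Metric.mem_ball_self hr0)).intervalIntegrable _ _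
  · exact hcc.aestronglyMeasurable.smul
      (((measurable_fderiv ℂ f).comp hmeas).aestronglyMeasurable)
  · refine MeasureTheory.ae_of_all _ fun t _ => ?_
    refine LipschitzOnWith.of_dist_le_mul fun x hx y hy => ?_
    have h1 := hlip.dist_le_mul _ (hmem x hx t) _ (hmem y hy t)
    rw [Real.coe_toNNReal _ (by positivity)] at h1
    rw [dist_eq_norm, ← mul_sub, norm_mul, Real.coe_nnabs, abs_of_nonneg (by positivity), mul_assoc]
    gcongr
    rw [← dist_eq_norm]
    simpa using h1
  · exact (hcc.norm.mul continuous_const).intervalIntegrable _ _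
  · refine MeasureTheory.ae_of_all _ fun t _ => ?_
    have h1 := (hfd (z0 + circleMap 0 r t • v) (by
      have := hmem z0 (Metric.mem_ball_self hr0) t
      simp only [Metric.mem_ball] at this ⊢; linarith)).hasFDerivAt
    have h2 : HasFDerivAt (fun z => f (z + circleMap 0 r t • v))
      (fderiv ℂ f (z0 + circleMap 0 r t • v)) z0 := by
      rw [hasFDerivAt_comp_add_right]; exact h1
    exact h2.const_mul (c t)
end

section
variable {n : ℕ}

/-- Well-behaved operators on holomorphic functions. -/
structure GoodOp (T : ((Fin n → ℂ) → ℂ) → ((Fin n → ℂ) → ℂ)) : Prop where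
  diff : ∀ (U : Set (Fin n → ℂ)) (f : (Fin n → ℂ) → ℂ), IsOpen U → DifferentiableOn ℂ f U →
    DifferentiableOn ℂ (T f) U
  congr : ∀ (U : Set (Fin n → ℂ)) (f g : (Fin n → ℂ) → ℂ), IsOpen U → EqOn f g U →
    EqOn (T f) (T g) U
  lin : ∀ (U : Set (Fin n → ℂ)) (f g : (Fin n → ℂ) → ℂ) (a b : ℂ), IsOpen U →
    DifferentiableOn ℂ f U → DifferentiableOn ℂ g U →
    EqOn (T (fun z => a * f z + b * g z)) (fun z => a * T f z + b * T g z) U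
  cauchy : ∀ δ : ℝ, 0 < δ → ∃ C : ℝ, 0 ≤ C ∧ ∀ (f : (Fin n → ℂ) → ℂ) (S : Set (Fin n → ℂ))
    (M : ℝ), DifferentiableOn ℂ f (Metric.thickening δ S) →
    (∀ z ∈ Metric.thickening δ S, ‖f z‖ ≤ M) → ∀ z ∈ S, ‖T f z‖ ≤ C * M
  dil : ∃ m : ℕ, ∀ (x0 : Fin n → ℂ) (r : ℂ) (U : Set (Fin n → ℂ)) (f : (Fin n → ℂ) → ℂ),
    IsOpen U → DifferentiableOn ℂ f U →
    EqOn (T (fun z => f (x0 + r • (z - x0)))) (fun z => r ^ m * T f (x0 + r • (z - x0)))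
      {z | x0 + r • (z - x0) ∈ U}

lemma isOpen_dil {U : Set (Fin n → ℂ)} (hU : IsOpen U) (x0 : Fin n → ℂ) (r : ℂ) :
    IsOpen {z : Fin n → ℂ | x0 + r • (z - x0) ∈ U} :=
  hU.preimage (by fun_prop : Continuous fun z : Fin n → ℂ => x0 + r • (z - x0))

lemma differentiableOn_dil {U : Set (Fin n → ℂ)} {f : (Fin n → ℂ) → ℂ}
    (hf : DifferentiableOn ℂ f U) (x0 : Fin n → ℂ) (r : ℂ) :
    DifferentiableOn ℂ (fun z => f (x0 + r • (z - x0))) {z : Fin n → ℂ | x0 + r • (z - x0) ∈ U} :=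
  hf.comp (by fun_prop : Differentiable ℂ fun z : Fin n → ℂ => x0 + r • (z - x0)).differentiableOn
    fun _ hz => hz

lemma goodOp_id : GoodOp (n := n) id where
  diff _ _ _ h := h
  congr _ _ _ _ h := h
  lin _ _ _ _ _ _ _ _ := fun _ _ => rfl
  cauchy δ hδ := ⟨1, zero_le_one, fun f S M _ h z hz => by
    simpa using h z (Metric.self_subset_thickening hδ S hz)⟩
  dil := ⟨0, fun _ _ _ _ _ _ => fun _ _ => by simp⟩

lemma goodOp_pd (i : Fin n) : GoodOp (pd i) where
  diff U f hU hf := pd_differentiableOn hU hf i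
  congr U f g hU h z hz := by
    simp only [pd]
    rw [(h.eventuallyEq_of_mem (hU.mem_nhds hz)).fderiv_eq]
  lin U f g a b hU hf hg z hz := by
    have h1 := (hf.differentiableAt (hU.mem_nhds hz)).hasFDerivAt
    have h2 := (hg.differentiableAt (hU.mem_nhds hz)).hasFDerivAt
    have := ((h1.const_mul a).add (h2.const_mul b)).fderiv
    simp only [pd]
    erw [this]
    simp
  cauchy δ hδ := by
    refine ⟨(δ / 2)⁻¹, by positivity, fun f S M hf hM z hz => ?_⟩
    have hsub : Metric.closedBall z (δ / 2) ⊆ Metric.thickening δ S := fun w hw =>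
      Metric.mem_thickening_iff.mpr ⟨z, hz, by simp at hw; linarith⟩
    have h1 := norm_fderiv_le_of_ball (f := f) (z := z) (M := M) (half_pos hδ)
      (fun w hw => hf.differentiableAt (Metric.isOpen_thickening.mem_nhds (hsub hw)))
      (fun w hw => hM w (hsub hw))
    calc ‖pd i f z‖ ≤ ‖fderiv ℂ f z‖ * ‖(Pi.single i 1 : Fin n → ℂ)‖ :=
          ContinuousLinearMap.le_opNorm _ _
      _ = ‖fderiv ℂ f z‖ := by simp [Pi.norm_single]
      _ ≤ _ := h1
      _ = _ := by field_simp
  dil := by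
    refine ⟨1, fun x0 r U f hU hf z hz => ?_⟩
    have h1 := (hf.differentiableAt (hU.mem_nhds hz)).hasFDerivAt
    have h2 : HasFDerivAt (fun z : Fin n → ℂ => x0 + r • (z - x0))
        (r • ContinuousLinearMap.id ℂ (Fin n → ℂ)) z :=
      (((hasFDerivAt_id z).sub_const x0).const_smul r).const_add x0
    have := (h1.comp z h2).fderiv
    simp only [pd]
    erw [this]
    simp

lemma GoodOp.comp {T S : ((Fin n → ℂ) → ℂ) → ((Fin n → ℂ) → ℂ)} (hT : GoodOp T)
    (hS : GoodOp S) : GoodOp (fun f => T (S f)) where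
  diff U f hU hf := hT.diff U _ hU (hS.diff U f hU hf)
  congr U f g hU h := hT.congr U _ _ hU (hS.congr U f g hU h)
  lin U f g a b hU hf hg :=
    (hT.congr U _ _ hU (hS.lin U f g a b hU hf hg)).trans
      (hT.lin U _ _ a b hU (hS.diff U f hU hf) (hS.diff U g hU hg))
  cauchy δ hδ := by
    obtain ⟨C1, hC1, h1⟩ := hS.cauchy (δ / 2) (half_pos hδ)
    obtain ⟨C2, hC2, h2⟩ := hT.cauchy (δ / 2) (half_pos hδ)
    refine ⟨C2 * C1, by positivity, fun f S' M hf hM z hz => ?_⟩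
    have hsub : Metric.thickening (δ / 2) (Metric.thickening (δ / 2) S') ⊆
        Metric.thickening δ S' := by
      have := Metric.thickening_thickening_subset (δ / 2) (δ / 2) S'
      simpa using this
    rw [mul_assoc]
    refine h2 (S f) S' (C1 * M) (hS.diff _ _ Metric.isOpen_thickening (hf.mono ?_)) ?_ z hz
    · exact Metric.thickening_mono (by linarith) _
    · exact h1 f _ M (hf.mono hsub) fun w hw => hM w (hsub hw)
  dil := by
    obtain ⟨m1, h1⟩ := hS.dil
    obtain ⟨m2, h2⟩ := hT.dil
    refine ⟨m1 + m2, fun x0 r U f hU hf => ?_⟩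
    have hU' := isOpen_dil hU x0 r
    have hd := differentiableOn_dil (hS.diff U f hU hf) x0 r
    intro z hz
    rw [hT.congr _ _ _ hU' (h1 x0 r U f hU hf) hz]
    have h3 := hT.lin _ _ _ (r ^ m1) 0 hU' hd hd hz
    simp only [zero_mul, add_zero] at h3
    rw [h3, h2 x0 r U (S f) hU (hS.diff U f hU hf) hz]
    ring

lemma GoodOp.iterate {T : ((Fin n → ℂ) → ℂ) → ((Fin n → ℂ) → ℂ)} (hT : GoodOp T) (k : ℕ) :
    GoodOp (T^[k]) := by
  induction k with
  | zero => exact goodOp_id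
  | succ k ih => exact ih.comp hT

lemma goodOp_foldr (ℓ : Fin n → ℕ) (l : List (Fin n)) :
    GoodOp (fun f => l.foldr (fun i g => (pd i)^[ℓ i] g) f) := by
  induction l with
  | nil => exact goodOp_id
  | cons i l ih => exact ((goodOp_pd i).iterate (ℓ i)).comp ih

lemma goodOp_Dml (ℓ : Fin n → ℕ) : GoodOp (Dml (n := n) ℓ) := goodOp_foldr ℓ _

lemma GoodOp.sub {T : ((Fin n → ℂ) → ℂ) → ((Fin n → ℂ) → ℂ)} (hT : GoodOp T)
    {U : Set (Fin n → ℂ)} {f g : (Fin n → ℂ) → ℂ} (hU : IsOpen U)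
    (hf : DifferentiableOn ℂ f U) (hg : DifferentiableOn ℂ g U) :
    EqOn (T (fun z => f z - g z)) (fun z => T f z - T g z) U := by
  have := hT.lin U f g 1 (-1) hU hf hg
  simpa [← sub_eq_add_neg] using this

/-- Polynomials centered at `ζ`. -/
def tE (ζ : Fin n → ℂ) (p : MvPolynomial (Fin n) ℂ) : (Fin n → ℂ) → ℂ :=
  fun z => MvPolynomial.eval (z - ζ) p

lemma hasFDerivAt_tE (ζ : Fin n → ℂ) (p : MvPolynomial (Fin n) ℂ) (z : Fin n → ℂ) :
    HasFDerivAt (tE ζ p) (∑ i, tE ζ (MvPolynomial.pderiv i p) z •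
      ContinuousLinearMap.proj (R := ℂ) (φ := fun _ : Fin n => ℂ) i) z := by
  induction p using MvPolynomial.induction_on with
  | C a =>
    refine ((hasFDerivAt_const a z).congr_of_eventuallyEq
      (Eventually.of_forall fun w => ?_)).congr_fderiv ?_
    · simp [tE]
    · ext v
      simp [tE]
  | add p q hp hq =>
    have := hp.add hq
    refine (this.congr_of_eventuallyEq (Eventually.of_forall fun w => ?_)).congr_fderiv ?_
    · simp [tE]
    · ext v
      simp [tE, add_mul, Finset.sum_add_distrib]
  | mul_X p j hp =>
    have hX : HasFDerivAt (fun w : Fin n → ℂ => w j - ζ j)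
        (ContinuousLinearMap.proj (R := ℂ) (φ := fun _ : Fin n => ℂ) j) z :=
      (ContinuousLinearMap.proj (R := ℂ) (φ := fun _ : Fin n => ℂ) j).hasFDerivAt.sub_const _
    have := hp.mul hX
    refine (this.congr_of_eventuallyEq (Eventually.of_forall fun w => ?_)).congr_fderiv ?_
    · simp [tE]
    · ext v
      simp [tE, MvPolynomial.pderiv_X, Pi.single_apply, add_mul, Finset.sum_add_distrib,
        Finset.mul_sum]
      simp [apply_ite, mul_assoc]

lemma differentiable_tE (ζ : Fin n → ℂ) (p : MvPolynomial (Fin n) ℂ) :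
    Differentiable ℂ (tE ζ p) := fun z => (hasFDerivAt_tE ζ p z).differentiableAt

lemma pd_tE (ζ : Fin n → ℂ) (p : MvPolynomial (Fin n) ℂ) (i : Fin n) :
    pd i (tE ζ p) = tE ζ (MvPolynomial.pderiv i p) := by
  ext z
  simp [pd, (hasFDerivAt_tE ζ p z).fderiv, Pi.single_apply]

/-- Algebraic version of the iterated partial derivative. -/
def DPl (ℓ : Fin n → ℕ) (l : List (Fin n)) :
    MvPolynomial (Fin n) ℂ →ₗ[ℂ] MvPolynomial (Fin n) ℂ :=
  l.foldr (fun i G => ((MvPolynomial.pderiv (R := ℂ) i).toLinearMap ^ (ℓ i)) ∘ₗ G) LinearMap.id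

lemma pd_iter_tE (ζ : Fin n → ℂ) (p : MvPolynomial (Fin n) ℂ) (i : Fin n) (k : ℕ) :
    (pd i)^[k] (tE ζ p) = tE ζ (((MvPolynomial.pderiv (R := ℂ) i).toLinearMap ^ k) p) := by
  induction k generalizing p with
  | zero => rfl
  | succ k ih =>
    rw [Function.iterate_succ_apply, pd_tE, ih, pow_succ]
    rfl

lemma foldr_tE (ζ : Fin n → ℂ) (p : MvPolynomial (Fin n) ℂ) (ℓ : Fin n → ℕ)
    (l : List (Fin n)) :
    l.foldr (fun i g => (pd i)^[ℓ i] g) (tE ζ p) = tE ζ (DPl ℓ l p) := by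
  induction l with
  | nil => rfl
  | cons i l ih => simp only [List.foldr_cons, ih, pd_iter_tE]; rfl

lemma Dml_tE (ζ : Fin n → ℂ) (p : MvPolynomial (Fin n) ℂ) (ℓ : Fin n → ℕ) :
    Dml ℓ (tE ζ p) = tE ζ (DPl ℓ (List.finRange n) p) := foldr_tE ζ p ℓ _

lemma coeff_pderiv_iter (p : MvPolynomial (Fin n) ℂ) (i : Fin n) (k : ℕ) (m : Fin n →₀ ℕ) :
    MvPolynomial.coeff m (((MvPolynomial.pderiv (R := ℂ) i).toLinearMap ^ k) p) =
      MvPolynomial.coeff (m + Finsupp.single i k) p * (((m i + 1).ascFactorial k : ℕ) : ℂ) := by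
  induction k generalizing p with
  | zero => simp
  | succ k ih =>
    rw [pow_succ, Module.End.mul_apply, ih]
    simp only [Derivation.coeFn_coe, MvPolynomial.coeff_pderiv]
    rw [add_assoc, ← Finsupp.single_add, Nat.ascFactorial_succ]
    simp
    ring

lemma coeff_DPl (p : MvPolynomial (Fin n) ℂ) (ℓ : Fin n → ℕ) (l : List (Fin n)) (hl : l.Nodup)
    (m : Fin n →₀ ℕ) (hm : ∀ i ∈ l, m i = 0) :
    MvPolynomial.coeff m (DPl ℓ l p) =
      MvPolynomial.coeff (m + (l.map fun i => Finsupp.single i (ℓ i)).sum) p *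
        (((l.map fun i => Nat.factorial (ℓ i)).prod : ℕ) : ℂ) := by
  induction l generalizing m with
  | nil => simp [DPl]
  | cons i l ih =>
    have h1 : DPl ℓ (i :: l) p =
      ((MvPolynomial.pderiv (R := ℂ) i).toLinearMap ^ (ℓ i)) (DPl ℓ l p) := rfl
    rw [List.nodup_cons] at hl
    rw [h1, coeff_pderiv_iter, ih hl.2, hm i (by simp)]
    · simp only [zero_add, Nat.one_ascFactorial, List.map_cons, List.sum_cons, List.prod_cons]
      rw [add_assoc]; push_cast; ring
    · intro j hj
      have : i ≠ j := fun h => hl.1 (h ▸ hj)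
      simp [hm j (by simp [hj]), this]

lemma Dml_tE_center (ζ : Fin n → ℂ) (p : MvPolynomial (Fin n) ℂ) (ℓ : Fin n → ℕ) :
    Dml ℓ (tE ζ p) ζ = ((∏ i, Nat.factorial (ℓ i) : ℕ) : ℂ) *
      MvPolynomial.coeff (Finsupp.equivFunOnFinite.symm ℓ) p := by
  have h := coeff_DPl p ℓ (List.finRange n) (List.nodup_finRange n) 0 (by simp)
  rw [Dml_tE]
  simp only [tE, sub_self]
  have h2 : MvPolynomial.eval (0 : Fin n → ℂ) (DPl ℓ (List.finRange n) p) =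
      MvPolynomial.coeff 0 (DPl ℓ (List.finRange n) p) := by
    rw [← MvPolynomial.constantCoeff_eq, ← MvPolynomial.eval_zero]
  rw [h2, h, mul_comm, zero_add]
  have h3 : (List.map (fun i => Finsupp.single i (ℓ i)) (List.finRange n)).sum =
      Finsupp.equivFunOnFinite.symm ℓ := by
    rw [← List.ofFn_eq_map, List.sum_ofFn]
    ext i
    simp [Finsupp.single_apply]
  have h4 : (List.map (fun i => Nat.factorial (ℓ i)) (List.finRange n)).prod =
      ∏ i, Nat.factorial (ℓ i) := by
    rw [← List.ofFn_eq_map, List.prod_ofFn]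
  rw [h3, h4]

lemma tE_monomial (ζ : Fin n → ℂ) (ℓ : Fin n → ℕ) (c : ℂ) (z : Fin n → ℂ) :
    tE ζ (MvPolynomial.monomial (Finsupp.equivFunOnFinite.symm ℓ) c) z =
      c * ∏ i, (z i - ζ i) ^ ℓ i := by
  simp [tE, MvPolynomial.eval_monomial, Finsupp.prod_fintype]

lemma pSumExt_eq_tE (Nj : ℕ → Fin n → ℕ) (g : (Fin n → ℕ) → (Fin n → ℂ) → ℂ)
    (ζ : Fin n → ℂ) (lam : ℕ) : pSumExt Nj g ζ lam = tE ζ (∑ j ∈ Finset.range (lam + 1),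
      ((((∏ i, Nat.factorial (Nj j i) : ℕ) : ℂ))⁻¹ * g (Nj j) ζ) •
        MvPolynomial.monomial (Finsupp.equivFunOnFinite.symm (Nj j)) 1) := by
  ext z
  simp only [pSumExt, tE, map_sum, MvPolynomial.smul_eval]
  refine Finset.sum_congr rfl fun j _ => ?_
  have := tE_monomial ζ (Nj j) 1 z
  rw [tE] at this
  rw [this, one_mul]

lemma Dml_pSumExt (Nj : ℕ → Fin n → ℕ) (g : (Fin n → ℕ) → (Fin n → ℂ) → ℂ)
    (ζ : Fin n → ℂ) (lam : ℕ) (ℓ : Fin n → ℕ) (z : Fin n → ℂ) :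
    Dml ℓ (pSumExt Nj g ζ lam) z = ∑ j ∈ Finset.range (lam + 1), g (Nj j) ζ *
      ((((∏ i, Nat.factorial (Nj j i) : ℕ) : ℂ))⁻¹ * Dml ℓ (tE ζ
        (MvPolynomial.monomial (Finsupp.equivFunOnFinite.symm (Nj j)) 1)) z) := by
  rw [pSumExt_eq_tE, Dml_tE]
  simp only [Dml_tE, tE, map_sum, map_smul, MvPolynomial.smul_eval]
  exact Finset.sum_congr rfl fun j _ => by ring

/-- Taylor partial sums of polynomials are eventually stationary. -/
lemma pSumExt_poly (Nj : ℕ → Fin n → ℕ) (hNj : Function.Bijective Nj)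
    (ζ : Fin n → ℂ) (p : MvPolynomial (Fin n) ℂ) : ∃ lam0, ∀ lam ≥ lam0,
      ∀ g : (Fin n → ℕ) → (Fin n → ℂ) → ℂ, (∀ ℓ, g ℓ ζ = Dml ℓ (tE ζ p) ζ) →
      pSumExt Nj g ζ lam = tE ζ p := by
  obtain ⟨inv, hinv1, hinv2⟩ := Function.bijective_iff_has_inverse.mp hNj
  refine ⟨p.support.sup fun d => inv d, fun lam hlam g hg => ?_⟩
  ext z
  simp only [pSumExt, tE, MvPolynomial.eval_eq', Pi.sub_apply]
  have h1 : ∀ j, (((∏ i, Nat.factorial (Nj j i) : ℕ) : ℂ))⁻¹ * g (Nj j) ζ =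
      MvPolynomial.coeff (Finsupp.equivFunOnFinite.symm (Nj j)) p := by
    intro j
    rw [hg, Dml_tE_center, inv_mul_cancel_left₀]
    exact_mod_cast (Finset.prod_pos fun i _ => Nat.factorial_pos _).ne'
  simp only [h1]
  symm
  refine Finset.sum_of_injOn (fun d => inv d) ?_ ?_ ?_ ?_
  · intro a _ b _ hab
    have := congrArg Nj hab
    simp only [hinv2 _] at this
    exact DFunLike.coe_injective this
  · intro d hd
    have := Finset.le_sup (f := fun d : Fin n →₀ ℕ => inv d) hd
    simp only [Finset.coe_range, mem_Iio]
    omega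
  · intro j _ hj
    have : MvPolynomial.coeff (Finsupp.equivFunOnFinite.symm (Nj j)) p = 0 := by
      by_contra hne
      apply hj
      refine ⟨Finsupp.equivFunOnFinite.symm (Nj j), by simpa using hne, ?_⟩
      simp [hinv1 j]
    rw [this, zero_mul]
  · intro d _
    have h2 : Nj (inv d) = d := hinv2 d
    simp only [h2, Finsupp.equivFunOnFinite_symm_coe]

/-- Every polynomial can be recentered. -/
lemma exists_tE (ζ : Fin n → ℂ) (p : MvPolynomial (Fin n) ℂ) :
    ∃ q, tE ζ q = mvEval p := by
  refine ⟨MvPolynomial.bind₁ (fun i => MvPolynomial.X i + MvPolynomial.C (ζ i)) p, ?_⟩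
  ext z
  simp only [tE, mvEval]
  induction p using MvPolynomial.induction_on with
  | C a => simp
  | add p q hp hq => simp [hp, hq]
  | mul_X p j hp => simp [hp]

end

section

/-- Holomorphy of maps into `C(X, ℂ)` can be checked pointwise. -/
lemma differentiableOn_CX {X : Type*} [TopologicalSpace X] [CompactSpace X]
    {F : ℂ → C(X, ℂ)} {V : Set ℂ} (hV : IsOpen V)
    (hc : ContinuousOn (fun p : ℂ × X => F p.1 p.2) (V ×ˢ univ))
    (hd : ∀ x, DifferentiableOn ℂ (fun s => F s x) V) : DifferentiableOn ℂ F V := by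
  have hFc : ContinuousOn F V := by
    rw [continuousOn_iff_continuous_domRestrict]
    apply ContinuousMap.continuous_of_continuous_uncurry
    exact hc.comp_continuous (f := fun p : V × X => ((p.1 : ℂ), p.2)) (by fun_prop)
      (fun p => ⟨p.1.2, mem_univ _⟩)
  intro s0 hs0
  obtain ⟨ρ, hρ, hball⟩ := Metric.isOpen_iff.mp hV s0 hs0
  set r : NNReal := ⟨ρ / 2, by positivity⟩ with hr
  have hrv : (r : ℝ) = ρ / 2 := rfl
  have hr0 : 0 < r := by rw [← NNReal.coe_pos, hrv]; positivity
  have hsub : Metric.closedBall s0 r ⊆ V := (Metric.closedBall_subset_ball (by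
    rw [hrv]; linarith)).trans hball
  have hci : CircleIntegrable F s0 r := by
    apply ContinuousOn.circleIntegrable (by positivity)
    exact hFc.mono (Metric.sphere_subset_closedBall.trans hsub)
  have hps := (hasFPowerSeriesOn_cauchy_integral hci hr0).analyticAt.differentiableAt
  refine (hps.congr_of_eventuallyEq ?_).differentiableWithinAt
  filter_upwards [Metric.ball_mem_nhds s0 (show (0 : ℝ) < r by exact_mod_cast hr0)] with s hs
  ext x
  have h1 := (DifferentiableOn.circleIntegral_sub_inv_smul (c := s0) (R := r) (w := s)
    ((hd x).mono hsub) hs)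
  have h2 : (∮ z in C(s0, r), (z - s)⁻¹ • F z) x = ∮ z in C(s0, r), (z - s)⁻¹ • F z x := by
    have h3 : IntervalIntegrable (fun t => deriv (circleMap s0 r) t •
        ((circleMap s0 r t - s)⁻¹ • F (circleMap s0 r t))) MeasureTheory.volume 0
        (2 * Real.pi) := by
      have h4 : CircleIntegrable (fun z => (z - s)⁻¹ • F z) s0 r := by
        apply ContinuousOn.circleIntegrable (by positivity)
        have h6 : ContinuousOn (fun z : ℂ => z - s) (Metric.sphere s0 r) := by fun_prop
        refine ContinuousOn.smul (h6.inv₀ ?_)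
          (hFc.mono (Metric.sphere_subset_closedBall.trans hsub))
        intro z hz h5
        rw [sub_eq_zero] at h5
        subst h5
        simp only [Metric.mem_sphere, Metric.mem_ball] at hz hs
        linarith
      exact h4.out
    have := (ContinuousMap.evalCLM (α := X) (M := ℂ) ℂ x).intervalIntegral_comp_comm h3
    exact this.symm
  rw [ContinuousMap.smul_apply, h2, h1, smul_smul, inv_mul_cancel₀ (by simp [Real.pi_ne_zero]),
    one_smul]

variable {n : ℕ}

/-- Restriction of polynomials to a set. -/
def polyMap (E : Set (Fin n → ℂ)) : MvPolynomial (Fin n) ℂ →ₐ[ℂ] C(E, ℂ) :=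
  MvPolynomial.aeval fun i => ⟨fun z : E => z.1 i, (continuous_apply i).comp continuous_subtype_val⟩

lemma polyMap_apply (E : Set (Fin n → ℂ)) (p : MvPolynomial (Fin n) ℂ) (z : E) :
    polyMap E p z = mvEval p z.1 := by
  simp only [polyMap, mvEval]
  induction p using MvPolynomial.induction_on with
  | C a => simp
  | add p q hp hq => simp [hp, hq]
  | mul_X p j hp => simp [hp]

/-- dilated function on `L` -/
def FL (L : Set (Fin n → ℂ)) (x0 : Fin n → ℂ) (f : (Fin n → ℂ) → ℂ) (s : ℂ) : C(L, ℂ) :=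
  open Classical in
  if h : Continuous (fun z : L => f (x0 + s • (z.1 - x0))) then ⟨_, h⟩ else 0

lemma FL_apply {L : Set (Fin n → ℂ)} {x0 : Fin n → ℂ} {f : (Fin n → ℂ) → ℂ} {s : ℂ}
    {U : Set (Fin n → ℂ)} (hf : DifferentiableOn ℂ f U)
    (hs : ∀ z ∈ L, x0 + s • (z - x0) ∈ U) (z : L) :
    FL L x0 f s z = f (x0 + s • (z.1 - x0)) := by
  have h : Continuous (fun z : L => f (x0 + s • (z.1 - x0))) :=
    hf.continuousOn.comp_continuous (by fun_prop) fun z => hs z.1 z.2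
  simp only [FL, h, dif_pos]
  rfl

lemma FL_differentiableOn {L : Set (Fin n → ℂ)} [CompactSpace L] {x0 : Fin n → ℂ}
    {f : (Fin n → ℂ) → ℂ} {U : Set (Fin n → ℂ)} (hf : DifferentiableOn ℂ f U) (hU : IsOpen U)
    {V : Set ℂ} (hV : IsOpen V) (hVU : ∀ s ∈ V, ∀ z ∈ L, x0 + s • (z - x0) ∈ U) :
    DifferentiableOn ℂ (FL L x0 f) V := by
  apply differentiableOn_CX hV
  · have h1 : ContinuousOn (fun p : ℂ × L => f (x0 + p.1 • (p.2.1 - x0))) (V ×ˢ univ) :=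
      hf.continuousOn.comp (by fun_prop) fun p hp => hVU p.1 hp.1 p.2.1 p.2.2
    exact h1.congr fun p hp => FL_apply hf (hVU p.1 hp.1) p.2
  · intro x
    have h1 : DifferentiableOn ℂ (fun s : ℂ => f (x0 + s • (x.1 - x0))) V :=
      hf.comp (by fun_prop) fun s hs => hVU s hs x.1 x.2
    exact h1.congr fun s hs => FL_apply hf (hVU s hs) x

/-- the coordinate functions -/
def coordL (L : Set (Fin n → ℂ)) (x0 : Fin n → ℂ) (i : Fin n) : C(L, ℂ) :=
  polyMap L (MvPolynomial.X i - MvPolynomial.C (x0 i))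

lemma coordL_apply (L : Set (Fin n → ℂ)) (x0 : Fin n → ℂ) (i : Fin n) (z : L) :
    coordL L x0 i z = z.1 i - x0 i := by
  simp [coordL, polyMap_apply, mvEval]

lemma FL_hasDerivAt {L : Set (Fin n → ℂ)} [CompactSpace L] {x0 : Fin n → ℂ}
    {f : (Fin n → ℂ) → ℂ} {U : Set (Fin n → ℂ)} (hf : DifferentiableOn ℂ f U) (hU : IsOpen U)
    {V : Set ℂ} (hV : IsOpen V) (hVU : ∀ s ∈ V, ∀ z ∈ L, x0 + s • (z - x0) ∈ U)
    {s : ℂ} (hs : s ∈ V) :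
    HasDerivAt (FL L x0 f) (∑ i, coordL L x0 i * FL L x0 (pd i f) s) s := by
  have h1 := ((FL_differentiableOn hf hU hV hVU).differentiableAt (hV.mem_nhds hs)).hasDerivAt
  suffices heq : ∑ i, coordL L x0 i * FL L x0 (pd i f) s = deriv (FL L x0 f) s by
    rw [heq]; exact h1
  ext z
  have h2 : HasDerivAt (fun s => FL L x0 f s z) (deriv (FL L x0 f) s z) s :=
    ((ContinuousMap.evalCLM (α := L) (M := ℂ) ℂ z).hasFDerivAt).comp_hasDerivAt s h1
  have h3 : HasDerivAt (fun s => f (x0 + s • (z.1 - x0)))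
      (fderiv ℂ f (x0 + s • (z.1 - x0)) (z.1 - x0)) s := by
    have h4 := (hf.differentiableAt (hU.mem_nhds (hVU s hs z.1 z.2))).hasFDerivAt
    have h5 : HasDerivAt (fun t : ℂ => x0 + t • (z.1 - x0)) (z.1 - x0) s := by
      simpa using ((hasDerivAt_id s).smul_const (z.1 - x0)).const_add x0
    exact h4.comp_hasDerivAt s h5
  have h6 : (fun s => FL L x0 f s z) =ᶠ[𝓝 s] (fun s => f (x0 + s • (z.1 - x0))) := by
    filter_upwards [hV.mem_nhds hs] with t ht
    exact FL_apply hf (hVU t ht) z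
  rw [h2.unique (h3.congr_of_eventuallyEq h6)]
  simp only [ContinuousMap.sum_apply, ContinuousMap.mul_apply, coordL_apply,
    FL_apply (pd_differentiableOn hU hf _) (hVU s hs), pd]
  generalize fderiv ℂ f (x0 + s • (z.1 - x0)) = T
  conv_rhs => rw [pi_eq_sum_univ' (z.1 - x0)]
  simp only [map_sum, map_smul, Pi.sub_apply, smul_eq_mul]

/-- Runge approximation on compact subsets of convex open sets. -/
lemma runge_convex {U : Set (Fin n → ℂ)} (hU : IsOpen U) (hUc : Convex ℝ U)
    {f : (Fin n → ℂ) → ℂ} (hf : DifferentiableOn ℂ f U) {L : Set (Fin n → ℂ)}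
    (hL : IsCompact L) (hLU : L ⊆ U) {ε : ℝ} (hε : 0 < ε) :
    ∃ p : MvPolynomial (Fin n) ℂ, ∀ z ∈ L, ‖mvEval p z - f z‖ < ε := by
  rcases L.eq_empty_or_nonempty with rfl | ⟨x0, hx0⟩
  · exact ⟨0, by simp⟩
  have : CompactSpace L := isCompact_iff_compactSpace.mp hL
  -- a convex neighbourhood of the segment [0,1]
  set I : Set ℂ := segment ℝ (0 : ℂ) 1 with hI
  have hIc : IsCompact I := by
    rw [hI, segment_eq_image_lineMap]
    exact isCompact_Icc.image (by fun_prop)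
  obtain ⟨V0, W0, hV0, -, hIV, hLW, hVW⟩ := generalized_tube_lemma hIc hL
    (n := (fun p : ℂ × (Fin n → ℂ) => x0 + p.1 • (p.2 - x0)) ⁻¹' U)
    (hU.preimage (by fun_prop)) (by
      rintro ⟨s, z⟩ ⟨hs, hz⟩
      rw [hI, segment_eq_image_lineMap] at hs
      obtain ⟨t, ht, rfl⟩ := hs
      have := hUc.add_smul_sub_mem (hLU hx0) (hLU hz) ht
      simp only [mem_preimage]
      convert this using 2
      ext i
      simp [AffineMap.lineMap_apply])
  obtain ⟨δ, hδ, hthick⟩ := hIc.exists_thickening_subset_open hV0 hIV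
  set V := Metric.thickening δ I with hVdef
  have hV : IsOpen V := Metric.isOpen_thickening
  have hVc : Convex ℝ V := (convex_segment _ _).thickening δ
  have hIV' : I ⊆ V := Metric.self_subset_thickening hδ I
  have h0 : (0 : ℂ) ∈ V := hIV' (left_mem_segment _ _ _)
  have h1 : (1 : ℂ) ∈ V := hIV' (right_mem_segment _ _ _)
  have hVU : ∀ s ∈ V, ∀ z ∈ L, x0 + s • (z - x0) ∈ U := fun s hs z hz =>
    hVW (mk_mem_prod (hthick hs) (hLW hz))
  -- the closed subspace
  set W : Submodule ℂ C(L, ℂ) := (LinearMap.range (polyMap L).toLinearMap).topologicalClosure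
    with hW
  have hWcl : IsClosed (W : Set C(L, ℂ)) := Submodule.isClosed_topologicalClosure _
  have key : FL L x0 f 1 ∈ W := by
    by_contra hnot
    have hne : ‖(W.mkQL (FL L x0 f 1))‖ ≠ 0 := by
      rw [norm_ne_zero_iff]
      intro h
      exact hnot ((Submodule.Quotient.mk_eq_zero W).mp h)
    obtain ⟨g, -, hg⟩ := exists_dual_vector ℂ _ hne
    set φ : C(L, ℂ) →L[ℂ] ℂ := g.comp W.mkQL with hφ
    have hφ0 : ∀ q, φ (polyMap L q) = 0 := by
      intro q
      have : W.mkQL (polyMap L q) = 0 := by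
        refine (Submodule.Quotient.mk_eq_zero W).mpr ?_
        exact Submodule.le_topologicalClosure _ ⟨q, rfl⟩
      simp [hφ, this]
    -- holomorphy
    have hdu : ∀ (f : (Fin n → ℂ) → ℂ), DifferentiableOn ℂ f U → ∀ q,
        DifferentiableOn ℂ (fun s => φ (polyMap L q * FL L x0 f s)) V := by
      intro f hf q
      exact φ.differentiable.comp_differentiableOn
        ((FL_differentiableOn hf hU hV hVU).const_mul (polyMap L q))
    have hiter : ∀ (k : ℕ) (f : (Fin n → ℂ) → ℂ), DifferentiableOn ℂ f U → ∀ q,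
        iteratedDeriv k (fun s => φ (polyMap L q * FL L x0 f s)) 0 = 0 := by
      intro k
      induction k with
      | zero =>
        intro f hf q
        simp only [iteratedDeriv_zero]
        have : polyMap L q * FL L x0 f 0 = polyMap L (q * MvPolynomial.C (f x0)) := by
          ext z
          simp [FL_apply hf (hVU 0 h0), polyMap_apply, mvEval]
        rw [this, hφ0]
      | succ k ih =>
        intro f hf q
        rw [iteratedDeriv_succ']
        have hev : deriv (fun s => φ (polyMap L q * FL L x0 f s)) =ᶠ[𝓝 0] fun s =>
            ∑ i, φ (polyMap L (q * (MvPolynomial.X i - MvPolynomial.C (x0 i))) *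
              FL L x0 (pd i f) s) := by
          filter_upwards [hV.mem_nhds h0] with s hs
          have h2 := φ.hasFDerivAt.comp_hasDerivAt s
            ((FL_hasDerivAt hf hU hV hVU hs).const_mul (polyMap L q))
          refine h2.deriv.trans ?_
          rw [Finset.mul_sum, map_sum]
          refine Finset.sum_congr rfl fun i _ => ?_
          rw [map_mul (polyMap L), mul_assoc]
          rfl
        rw [EventuallyEq.iteratedDeriv_eq k hev, iteratedDeriv_fun_sum]
        · exact Finset.sum_eq_zero fun i _ => ih _ (pd_differentiableOn hU hf i) _
        · intro i _
          exact (((hdu _ (pd_differentiableOn hU hf i) _).analyticOnNhd hV) 0 h0).contDiffAt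
    have han := (hdu f hf 1).analyticOnNhd hV
    have hz : (fun s => φ (polyMap L 1 * FL L x0 f s)) =ᶠ[𝓝 0] 0 := by
      have h2 := (han 0 h0).hasFPowerSeriesAt
      have h3 : (FormalMultilinearSeries.ofScalars ℂ fun k =>
          iteratedDeriv k (fun s => φ (polyMap L 1 * FL L x0 f s)) 0 / ((k.factorial : ℕ) : ℂ)) =
          (0 : FormalMultilinearSeries ℂ ℂ ℂ) := by
        ext k
        simp only [FormalMultilinearSeries.ofScalars, hiter k f hf 1, zero_div]
        simp
      rw [h3] at h2
      exact h2.eventually_eq_zero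
    have h4 := han.eqOn_zero_of_preconnected_of_eventuallyEq_zero hVc.isPreconnected h0 hz h1
    simp only [map_one, one_mul, Pi.zero_apply, hφ, ContinuousLinearMap.comp_apply] at h4
    rw [h4] at hg
    exact hne (Complex.ofReal_eq_zero.mp hg.symm)
  have key2 : FL L x0 f 1 ∈ closure (LinearMap.range (polyMap L).toLinearMap : Set C(L, ℂ)) := by
    rw [← Submodule.topologicalClosure_coe]; exact key
  obtain ⟨_, ⟨p, rfl⟩, hp⟩ := Metric.mem_closure_iff.mp key2 ε hε
  refine ⟨p, fun z hz => ?_⟩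
  rw [dist_comm, dist_eq_norm] at hp
  have h5 := (ContinuousMap.norm_coe_le_norm (polyMap L p - FL L x0 f 1) ⟨z, hz⟩).trans_lt hp
  simpa [FL_apply hf (hVU 1 h1), polyMap_apply] using h5

end

section
variable {n : ℕ}

lemma numeric_ratio {X Y d : ℂ} {η : ℝ} (hη : η ≤ 1 / 2) (hY : ‖Y‖ ≤ η * ‖X‖)
    (hd : (X + Y) * d = 1) : ‖Y * d‖ ≤ 2 * η := by
  have h1 : ‖X + Y‖ * ‖d‖ = 1 := by rw [← norm_mul, hd, norm_one]
  have h2 : ‖X‖ - ‖Y‖ ≤ ‖X + Y‖ := by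
    have := norm_sub_norm_le X (-Y)
    simpa using this
  have h3 : (1 - η) * ‖X‖ ≤ ‖X + Y‖ := by nlinarith
  rw [norm_mul]
  have hd0 : 0 ≤ ‖d‖ := norm_nonneg d
  have hX0 : 0 ≤ ‖X‖ := norm_nonneg X
  have h4 : ‖X‖ / 2 ≤ ‖X + Y‖ := by nlinarith
  have h5 : ‖X‖ * ‖d‖ ≤ 2 := by nlinarith
  have hη0 : 0 ≤ η ∨ ‖X‖ = 0 := by
    by_contra h
    push Not at h
    have : 0 < ‖X‖ := lt_of_le_of_ne hX0 (Ne.symm h.2)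
    nlinarith [norm_nonneg Y]
  rcases hη0 with h | h
  · calc ‖Y‖ * ‖d‖ ≤ η * ‖X‖ * ‖d‖ := by gcongr
      _ = η * (‖X‖ * ‖d‖) := by ring
      _ ≤ η * 2 := by gcongr
      _ = 2 * η := by ring
  · exfalso
    have h6 : ‖Y‖ = 0 := le_antisymm (by simpa [h] using hY) (norm_nonneg _)
    rw [norm_eq_zero] at h h6
    simp [h, h6] at hd

lemma numeric_cayley {w : ℂ} {a R : ℝ} (ha : 0 < a) (hw : a ≤ w.re) (hR : ‖w‖ ≤ R) :
    ‖w - 1‖ ≤ Real.sqrt (1 - 4 * a / (R + 1) ^ 2) * ‖w + 1‖ := by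
  have hR0 : 0 ≤ R := (norm_nonneg w).trans hR
  have e1 : ‖w - 1‖ ^ 2 = (w.re - 1) ^ 2 + w.im ^ 2 := by
    rw [← Complex.normSq_eq_norm_sq, Complex.normSq_apply]; simp; ring
  have e2 : ‖w + 1‖ ^ 2 = (w.re + 1) ^ 2 + w.im ^ 2 := by
    rw [← Complex.normSq_eq_norm_sq, Complex.normSq_apply]; simp; ring
  have e3 : ‖w + 1‖ ≤ R + 1 := (norm_add_le _ _).trans (by simpa using hR)
  have key : ‖w - 1‖ ^ 2 ≤ (1 - 4 * a / (R + 1) ^ 2) * ‖w + 1‖ ^ 2 := by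
    have h1 : ‖w + 1‖ ^ 2 ≤ (R + 1) ^ 2 := by gcongr
    have h2 : 4 * a / (R + 1) ^ 2 * ‖w + 1‖ ^ 2 ≤ 4 * a := by
      rw [div_mul_eq_mul_div, div_le_iff₀ (by positivity)]
      gcongr
    nlinarith
  have hpos : 0 < ‖w + 1‖ := by
    have : 0 < ‖w + 1‖ ^ 2 := by rw [e2]; nlinarith [sq_nonneg w.im]
    exact lt_of_le_of_ne (norm_nonneg _) (fun h => by rw [← h] at this; norm_num at this)
  have h0 : 0 ≤ 1 - 4 * a / (R + 1) ^ 2 := by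
    by_contra h
    push Not at h
    nlinarith [sq_nonneg ‖w - 1‖, sq_nonneg ‖w + 1‖, pow_pos hpos 2]
  apply le_of_sq_le_sq _ (by positivity)
  rw [mul_pow, Real.sq_sqrt h0]
  exact key

lemma sqrt_lt_one_aux {a R : ℝ} (ha : 0 < a) (hR : 0 ≤ R) :
    Real.sqrt (1 - 4 * a / (R + 1) ^ 2) < 1 := by
  rw [Real.sqrt_lt' one_pos]
  have : 0 < 4 * a / (R + 1) ^ 2 := by positivity
  linarith

/-- the uniform closure of the polynomials -/
def PA (E : Set (Fin n → ℂ)) [CompactSpace E] : Subalgebra ℂ C(E, ℂ) :=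
  (polyMap E).range.topologicalClosure

lemma PA_approx {E : Set (Fin n → ℂ)} [CompactSpace E] {h : C(E, ℂ)} (hh : h ∈ PA E) {ε : ℝ}
    (hε : 0 < ε) : ∃ p : MvPolynomial (Fin n) ℂ, ∀ z : E, ‖mvEval p z.1 - h z‖ < ε := by
  have key2 : h ∈ closure ((polyMap E).range : Set C(E, ℂ)) := by
    rw [← Subalgebra.topologicalClosure_coe]; exact hh
  obtain ⟨_, ⟨p, rfl⟩, hp⟩ := Metric.mem_closure_iff.mp key2 ε hε
  refine ⟨p, fun z => ?_⟩
  rw [dist_comm, dist_eq_norm] at hp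
  have h5 := (ContinuousMap.norm_coe_le_norm (polyMap E p - h) z).trans_lt hp
  rw [ContinuousMap.sub_apply] at h5
  rw [← polyMap_apply]
  exact h5

lemma polyMap_mem_PA (E : Set (Fin n → ℂ)) [CompactSpace E] (p : MvPolynomial (Fin n) ℂ) :
    polyMap E p ∈ PA E :=
  Subalgebra.le_topologicalClosure _ ⟨p, rfl⟩

lemma kallin_indicator {E : Set (Fin n → ℂ)} [CompactSpace E] [Nonempty E]
    (w : MvPolynomial (Fin n) ℂ) {a : ℝ} (ha : 0 < a)
    (hw : ∀ z : E, a ≤ |(mvEval w z.1).re|) {ε : ℝ} (hε : 0 < ε) :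
    ∃ h ∈ PA E, ∀ z : E, (0 < (mvEval w z.1).re → ‖1 - h z‖ < ε) ∧
      ((mvEval w z.1).re < 0 → ‖h z‖ < ε) := by
  have hcl : IsClosed (PA E : Set C(E, ℂ)) := Subalgebra.isClosed_topologicalClosure _
  have : CompleteSpace (PA E) := hcl.completeSpace_coe
  set W : PA E := ⟨polyMap E w, polyMap_mem_PA E w⟩ with hW
  have hspec : ∀ μ ∈ spectrum ℂ W, μ.re ≠ 0 := by
    intro μ hμ hre
    have hb := Subalgebra.spectrum_isBounded_connectedComponentIn (PA E) W hμ
    have hline : {z : ℂ | z.re = 0} ⊆ connectedComponentIn (spectrum ℂ (W : C(E, ℂ)))ᶜ μ := by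
      apply IsPreconnected.subset_connectedComponentIn
      · exact (convex_hyperplane (f := Complex.re) Complex.reLm.isLinear 0).isPreconnected
      · exact hre
      · intro z hz hz2
        rw [ContinuousMap.spectrum_eq_range] at hz2
        obtain ⟨x, rfl⟩ := hz2
        have := hw x
        rw [← polyMap_apply] at this
        simp only [mem_ofPred_eq] at hz
        rw [show (polyMap E w) x = (W : C(E, ℂ)) x from rfl, hz] at this
        simp at this
        linarith
    obtain ⟨C, hC⟩ := (hb.subset hline).exists_norm_le
    have := hC (((|C| + 1 : ℝ) : ℂ) * Complex.I) (by simp)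
    simp only [norm_mul, Complex.norm_I, mul_one, Complex.norm_real, Real.norm_eq_abs] at this
    have h2 := le_abs_self (|C| + 1)
    have h3 := le_abs_self C
    linarith
  have hDunit : ∀ N : ℕ, IsUnit ((W + 1) ^ N + (W - 1) ^ N) := by
    intro N
    set D : Polynomial ℂ := (Polynomial.X + 1) ^ N + (Polynomial.X - 1) ^ N with hD
    have e1 : Polynomial.aeval W D = (W + 1) ^ N + (W - 1) ^ N := by simp [hD]
    rw [← e1]
    by_contra hnu
    have h0 : (0 : ℂ) ∈ spectrum ℂ (Polynomial.aeval W D) := by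
      rw [spectrum.zero_mem_iff]; exact hnu
    rw [spectrum.map_polynomial_aeval_of_nonempty _ _ (spectrum.nonempty W)] at h0
    obtain ⟨μ, hμ, hz⟩ := h0
    simp only [hD, Polynomial.eval_add, Polynomial.eval_sub, Polynomial.eval_pow,
      Polynomial.eval_X, Polynomial.eval_one] at hz
    have hN : N ≠ 0 := by
      rintro rfl
      norm_num at hz
    have h1 : ‖μ + 1‖ ^ N = ‖μ - 1‖ ^ N := by
      rw [← norm_pow, ← norm_pow, eq_neg_of_add_eq_zero_left hz, norm_neg]
    have h2 : ‖μ + 1‖ = ‖μ - 1‖ := (pow_left_inj₀ (norm_nonneg _) (norm_nonneg _) hN).mp h1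
    have h3 : ‖μ + 1‖ ^ 2 = ‖μ - 1‖ ^ 2 := by rw [h2]
    rw [← Complex.normSq_eq_norm_sq, ← Complex.normSq_eq_norm_sq, Complex.normSq_apply,
      Complex.normSq_apply] at h3
    simp at h3
    exact hspec μ hμ (by linarith)
  set R : ℝ := ‖polyMap E w‖ with hR
  set ρ := Real.sqrt (1 - 4 * a / (R + 1) ^ 2) with hρ
  have hρ1 : ρ < 1 := sqrt_lt_one_aux ha (norm_nonneg _)
  have hρ0 : 0 ≤ ρ := Real.sqrt_nonneg _
  obtain ⟨N, hN⟩ := exists_pow_lt_of_lt_one (show 0 < min (1 / 2) (ε / 3) by positivity) hρ1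
  obtain ⟨d, hd⟩ := (hDunit N).exists_right_inv
  refine ⟨((W + 1) ^ N * d : PA E), SetLike.coe_mem _, fun z => ?_⟩
  have hdz : ((mvEval w z.1 + 1) ^ N + (mvEval w z.1 - 1) ^ N) * (d : C(E, ℂ)) z = 1 := by
    have := congrArg (fun t : PA E => (t : C(E, ℂ)) z) hd
    simpa [hW, polyMap_apply] using this
  have hval : (((W + 1) ^ N * d : PA E) : C(E, ℂ)) z = (mvEval w z.1 + 1) ^ N * (d : C(E, ℂ)) z := by
    simp [hW, polyMap_apply]
  have hnorm : ‖mvEval w z.1‖ ≤ R := by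
    rw [← polyMap_apply]; exact ContinuousMap.norm_coe_le_norm _ _
  have hη : ρ ^ N ≤ 1 / 2 := hN.le.trans (min_le_left _ _)
  have hη2 : ρ ^ N < ε / 3 := hN.trans_le (min_le_right _ _)
  rw [hval]
  constructor
  · intro hpos
    have h1 := numeric_cayley ha (by rw [← abs_of_pos hpos]; exact hw z) hnorm
    have h2 : ‖(mvEval w z.1 - 1) ^ N‖ ≤ ρ ^ N * ‖(mvEval w z.1 + 1) ^ N‖ := by
      rw [norm_pow, norm_pow, ← mul_pow]
      gcongr
    have h3 := numeric_ratio hη h2 hdz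
    rw [show 1 - (mvEval w z.1 + 1) ^ N * (d : C(E, ℂ)) z =
      (mvEval w z.1 - 1) ^ N * (d : C(E, ℂ)) z by linear_combination -hdz]
    linarith
  · intro hneg
    have h1 := numeric_cayley (w := - mvEval w z.1) (R := R) ha (by
      rw [Complex.neg_re, ← abs_of_neg hneg]; exact hw z) (by rwa [norm_neg])
    have h2 : ‖(mvEval w z.1 + 1) ^ N‖ ≤ ρ ^ N * ‖(mvEval w z.1 - 1) ^ N‖ := by
      rw [norm_pow, norm_pow, ← mul_pow]
      gcongr
      rw [← norm_neg, neg_add', ← norm_neg (mvEval w z.1 - 1), neg_sub', sub_neg_eq_add]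
      exact h1
    have h3 := numeric_ratio hη h2 (by rw [add_comm]; exact hdz)
    linarith

/-- polynomial representing a linear functional -/
lemma exists_poly_linear (f : (Fin n → ℂ) →L[ℂ] ℂ) (c : ℂ) :
    ∃ p : MvPolynomial (Fin n) ℂ, ∀ z, mvEval p z = f z - c := by
  refine ⟨∑ i, MvPolynomial.C (f (Pi.single i 1)) * MvPolynomial.X i - MvPolynomial.C c,
    fun z => ?_⟩
  simp only [mvEval, map_sub, map_sum, map_mul, MvPolynomial.eval_C, MvPolynomial.eval_X]
  conv_rhs => rw [pi_eq_sum_univ' z]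
  simp only [map_sum, map_smul, smul_eq_mul]
  congr 1
  exact Finset.sum_congr rfl fun i _ => mul_comm _ _

lemma kallin {L K : Set (Fin n → ℂ)} (hL : IsCompact L) (hLc : Convex ℝ L) (hK : IsCompact K)
    (hKc : Convex ℝ K) (hd : Disjoint L K) (p1 P : MvPolynomial (Fin n) ℂ) {ε : ℝ}
    (hε : 0 < ε) : ∃ q : MvPolynomial (Fin n) ℂ, (∀ z ∈ L, ‖mvEval q z - mvEval p1 z‖ < ε) ∧
      ∀ z ∈ K, ‖mvEval q z - mvEval P z‖ < ε := by
  have : CompactSpace (L ∪ K : Set (Fin n → ℂ)) := isCompact_iff_compactSpace.mp (hL.union hK)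
  rcases (L ∪ K).eq_empty_or_nonempty with he | hne
  · rw [union_empty_iff] at he
    exact ⟨0, by simp [he.1, he.2]⟩
  have : Nonempty (L ∪ K : Set (Fin n → ℂ)) := hne.to_subtype
  obtain ⟨f, u, v, hu, huv, hv⟩ := RCLike.geometric_hahn_banach_compact_closed (𝕜 := ℂ) hLc hL hKc
    hK.isClosed hd
  obtain ⟨w, hw⟩ := exists_poly_linear f (((u + v) / 2 : ℝ) : ℂ)
  have hwL : ∀ z ∈ L, (mvEval w z).re < -((v - u) / 2) := by
    intro z hz
    have := hu z hz
    rw [hw, Complex.sub_re, Complex.ofReal_re]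
    simp only [RCLike.re_to_complex] at this
    linarith
  have hwK : ∀ z ∈ K, (v - u) / 2 < (mvEval w z).re := by
    intro z hz
    have := hv z hz
    rw [hw, Complex.sub_re, Complex.ofReal_re]
    simp only [RCLike.re_to_complex] at this
    linarith
  have ha : 0 < (v - u) / 2 := by linarith
  set B : ℝ := ‖polyMap (L ∪ K) (P - p1)‖ + 1 with hB
  have hB0 : 0 < B := by positivity
  obtain ⟨h, hhA, hh⟩ := kallin_indicator (E := L ∪ K) w ha (by
    rintro ⟨z, hz | hz⟩
    · have := hwL z hz
      rw [abs_of_neg (by linarith)]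
      linarith
    · have := hwK z hz
      rw [abs_of_pos (by linarith)]
      linarith) (show 0 < ε / 2 / B by positivity)
  obtain ⟨q, hq⟩ := PA_approx (E := L ∪ K) (h := polyMap _ p1 + h * polyMap _ (P - p1))
    ((PA _).add_mem (polyMap_mem_PA _ _) ((PA _).mul_mem hhA (polyMap_mem_PA _ _)))
    (half_pos hε)
  have hbd : ∀ z : (L ∪ K : Set (Fin n → ℂ)), ‖mvEval P z.1 - mvEval p1 z.1‖ < B := by
    intro z
    have := ContinuousMap.norm_coe_le_norm (polyMap (L ∪ K) (P - p1)) z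
    rw [polyMap_apply] at this
    have e : mvEval (P - p1) z.1 = mvEval P z.1 - mvEval p1 z.1 := by simp [mvEval]
    rw [e] at this
    linarith
  have hq' : ∀ z : (L ∪ K : Set (Fin n → ℂ)), ‖mvEval q z.1 - (mvEval p1 z.1 +
      h z * (mvEval P z.1 - mvEval p1 z.1))‖ < ε / 2 := by
    intro z
    have := hq z
    rw [ContinuousMap.add_apply, ContinuousMap.mul_apply, polyMap_apply, polyMap_apply] at this
    simpa only [mvEval, map_sub] using this
  have hfin : ∀ {x y : ℂ}, ‖x‖ < ε / 2 / B → ‖y‖ < B → ‖x * y‖ < ε / 2 := by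
    intro x y hx hy
    rw [norm_mul]
    calc ‖x‖ * ‖y‖ ≤ ‖x‖ * B := by gcongr
      _ < ε / 2 / B * B := by gcongr
      _ = ε / 2 := by field_simp
  refine ⟨q, fun z hz => ?_, fun z hz => ?_⟩
  · have h1 := hq' ⟨z, Or.inl hz⟩
    have h2 := hfin ((hh ⟨z, Or.inl hz⟩).2 (by have := hwL z hz; simp only; linarith))
      (hbd ⟨z, Or.inl hz⟩)
    set t := h ⟨z, Or.inl hz⟩
    have h3 := norm_add_le (mvEval q z - (mvEval p1 z + t * (mvEval P z - mvEval p1 z)))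
      (t * (mvEval P z - mvEval p1 z))
    rw [show mvEval q z - mvEval p1 z = (mvEval q z - (mvEval p1 z + t * (mvEval P z - mvEval p1 z)))
      + (t * (mvEval P z - mvEval p1 z)) by ring]
    simp only at h1 h2
    linarith
  · have h1 := hq' ⟨z, Or.inr hz⟩
    have h2 := hfin ((hh ⟨z, Or.inr hz⟩).1 (by have := hwK z hz; simp only; linarith))
      (hbd ⟨z, Or.inr hz⟩)
    set t := h ⟨z, Or.inr hz⟩
    have h3 := norm_sub_le (mvEval q z - (mvEval p1 z + t * (mvEval P z - mvEval p1 z)))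
      ((1 - t) * (mvEval P z - mvEval p1 z))
    rw [show mvEval q z - mvEval P z = (mvEval q z - (mvEval p1 z + t * (mvEval P z - mvEval p1 z)))
      - ((1 - t) * (mvEval P z - mvEval p1 z)) by ring]
    simp only at h1 h2
    linarith
end

section
variable {n : ℕ}

lemma differentiable_mvEval (p : MvPolynomial (Fin n) ℂ) : Differentiable ℂ (mvEval p) := by
  have := differentiable_tE (0 : Fin n → ℂ) p
  have e : tE (0 : Fin n → ℂ) p = mvEval p := by ext z; simp [tE, mvEval]
  rwa [e] at this

lemma dil_mem {Ω : Set (Fin n → ℂ)} (hΩo : IsOpen Ω) (hΩcv : Convex ℝ Ω) {x0 : Fin n → ℂ}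
    (hx0 : x0 ∈ Ω) {r : ℝ} (hr0 : 0 ≤ r) (hr1 : r < 1) {z : Fin n → ℂ} (hz : z ∈ closure Ω) :
    x0 + (r : ℂ) • (z - x0) ∈ Ω := by
  have h := hΩcv.add_smul_sub_mem_interior' hz (hΩo.interior_eq.symm ▸ hx0 : x0 ∈ interior Ω)
    (t := 1 - r) ⟨by linarith, by linarith⟩
  rw [hΩo.interior_eq] at h
  convert h using 1
  ext i
  simp
  ring

lemma dil_mem_closure {Ω : Set (Fin n → ℂ)} (hΩo : IsOpen Ω) (hΩcv : Convex ℝ Ω)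
    {x0 : Fin n → ℂ} (hx0 : x0 ∈ Ω) {r : ℝ} (hr0 : 0 ≤ r) (hr1 : r ≤ 1) {z : Fin n → ℂ}
    (hz : z ∈ closure Ω) : x0 + (r : ℂ) • (z - x0) ∈ closure Ω := by
  rcases hr1.lt_or_eq with h | h
  · exact subset_closure (dil_mem hΩo hΩcv hx0 hr0 h hz)
  · subst h; simpa using hz

lemma dil_unif {Ω : Set (Fin n → ℂ)} (hΩo : IsOpen Ω) (hΩcv : Convex ℝ Ω) {x0 : Fin n → ℂ}
    (hx0 : x0 ∈ Ω) {g : (Fin n → ℂ) → ℂ} (hg : ContinuousOn g (closure Ω))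
    {L : Set (Fin n → ℂ)} (hL : IsCompact L) (hLΩ : L ⊆ closure Ω) (m : ℕ) {ε : ℝ} (hε : 0 < ε) :
    ∀ᶠ r : ℝ in 𝓝[<] 1, ∀ z ∈ L, ‖(r : ℂ) ^ m * g (x0 + (r : ℂ) • (z - x0)) - g z‖ < ε := by
  have hc : ContinuousOn (fun q : ℝ × (Fin n → ℂ) => (q.1 : ℂ) ^ m *
      g (x0 + (q.1 : ℂ) • (q.2 - x0))) (Icc (0 : ℝ) 1 ×ˢ L) := by
    apply ContinuousOn.mul (by fun_prop)
    exact hg.comp (by fun_prop) fun q hq =>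
      dil_mem_closure hΩo hΩcv hx0 hq.1.1 hq.1.2 (hLΩ hq.2)
  have hu := (isCompact_Icc.prod hL).uniformContinuousOn_of_continuous hc
  obtain ⟨δ, hδ, hu⟩ := Metric.uniformContinuousOn_iff.mp hu ε hε
  have h1 : ∀ᶠ r : ℝ in 𝓝[<] 1, r ∈ Ioo (max 0 (1 - δ)) 1 :=
    Ioo_mem_nhdsLT (by simp [hδ])
  filter_upwards [h1] with r hr z hz
  have hr0 : 0 < r := (le_max_left _ _).trans_lt hr.1
  have hrδ : 1 - δ < r := (le_max_right _ _).trans_lt hr.1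
  have := hu (r, z) ⟨⟨hr0.le, hr.2.le⟩, hz⟩ (1, z) ⟨⟨zero_le_one, le_rfl⟩, hz⟩ (by
    rw [Prod.dist_eq, dist_self, max_eq_left dist_nonneg, Real.dist_eq, abs_lt]
    constructor <;> linarith [hr.2])
  rw [dist_eq_norm] at this
  simpa using this

lemma key_approx {Ω : Set (Fin n → ℂ)} (hΩo : IsOpen Ω) (hΩcv : Convex ℝ Ω) {x0 : Fin n → ℂ}
    (hx0 : x0 ∈ Ω) (f : AinfSpace n Ω) {K : Set (Fin n → ℂ)} (hK : IsCompact K)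
    (hKc : Convex ℝ K) (hKΩ : K ∩ closure Ω = ∅) (P : MvPolynomial (Fin n) ℂ)
    (F : Finset (Fin n → ℕ)) (R : ℝ) {ε : ℝ} (hε : 0 < ε) :
    ∃ q : MvPolynomial (Fin n) ℂ,
      (∀ ℓ ∈ F, ∀ z ∈ closure Ω ∩ Metric.closedBall x0 R,
        ‖Dml ℓ (mvEval q) z - AinfExt f ℓ z‖ < ε) ∧
      ∀ z ∈ K, ‖mvEval q z - mvEval P z‖ < ε := by
  set L := closure Ω ∩ Metric.closedBall x0 R with hLdef
  have hL : IsCompact L := (isCompact_closedBall x0 R).inter_left isClosed_closure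
  have hLc : Convex ℝ L := hΩcv.closure.inter (convex_closedBall x0 R)
  have hLΩ : L ⊆ closure Ω := inter_subset_left
  choose m hm using fun ℓ : Fin n → ℕ => (goodOp_Dml ℓ).dil
  have h1 : ∀ᶠ r : ℝ in 𝓝[<] 1, ∀ ℓ ∈ F, ∀ z ∈ L,
      ‖(r : ℂ) ^ m ℓ * AinfExt f ℓ (x0 + (r : ℂ) • (z - x0)) - AinfExt f ℓ z‖ < ε / 2 := by
    rw [eventually_all_finset]
    intro ℓ _
    exact dil_unif hΩo hΩcv hx0 (AinfExt_continuousOn f ℓ) hL hLΩ (m ℓ) (half_pos hε)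
  have h2 : ∀ᶠ r : ℝ in 𝓝[<] 1, r ∈ Ioo (0 : ℝ) 1 := Ioo_mem_nhdsLT one_pos
  obtain ⟨r, hr, hr01⟩ := (h1.and h2).exists
  set V : Set (Fin n → ℂ) := {z | x0 + (r : ℂ) • (z - x0) ∈ Ω} with hV
  have hVo : IsOpen V := isOpen_dil hΩo x0 r
  have hVc : Convex ℝ V := by
    intro z hz w hw a b ha hb hab
    have := hΩcv hz hw ha hb hab
    simp only [hV, mem_ofPred_eq]
    convert this using 1
    ext i
    have hab' : (a : ℂ) + b = 1 := by exact_mod_cast hab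
    simp
    linear_combination (-x0 i + r * x0 i) * hab'
  have hLV : L ⊆ V := fun z hz => dil_mem hΩo hΩcv hx0 hr01.1.le hr01.2 (hLΩ hz)
  have hfd : DifferentiableOn ℂ (fun z => f.1 (x0 + (r : ℂ) • (z - x0))) V :=
    differentiableOn_dil f.2.1 x0 r
  obtain ⟨δ, hδ, hδs⟩ := hL.exists_cthickening_subset_open
    (hVo.inter hK.isClosed.isOpen_compl) (fun z hz => ⟨hLV hz, fun hzK => by
      have : z ∈ K ∩ closure Ω := ⟨hzK, hLΩ hz⟩
      rw [hKΩ] at this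
      exact this⟩)
  choose C hC0 hC using fun ℓ : Fin n → ℕ => (goodOp_Dml ℓ).cauchy δ hδ
  set Cs := ∑ ℓ ∈ F, C ℓ with hCs
  have hCs0 : 0 ≤ Cs := Finset.sum_nonneg fun ℓ _ => hC0 ℓ
  set η := ε / (4 * (Cs + 1)) with hη
  have hη0 : 0 < η := by positivity
  have hηε : η < ε := by
    rw [hη, div_lt_iff₀ (by positivity)]
    nlinarith
  have hCη : ∀ ℓ ∈ F, C ℓ * (2 * η) ≤ ε / 2 := by
    intro ℓ hℓ
    have : C ℓ ≤ Cs := Finset.single_le_sum (f := C) (fun ℓ _ => hC0 ℓ) hℓ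
    calc C ℓ * (2 * η) ≤ (Cs + 1) * (2 * η) := by gcongr; linarith
      _ = ε / 2 := by rw [hη]; field_simp; norm_num
  have hL2 : IsCompact (Metric.cthickening δ L) := hL.cthickening
  obtain ⟨p1, hp1⟩ := runge_convex hVo hVc hfd hL2 (hδs.trans inter_subset_left) hη0
  obtain ⟨q, hq1, hq2⟩ := kallin hL2 (hLc.cthickening δ) hK hKc
    (disjoint_left.mpr fun z hz => (hδs hz).2) p1 P hη0
  refine ⟨q, fun ℓ hℓ z hz => ?_, fun z hz => (hq2 z hz).trans hηε⟩
  have hts : Metric.thickening δ L ⊆ Metric.cthickening δ L := Metric.thickening_subset_cthickening _ _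
  have h3 := hC ℓ (fun z => mvEval q z - f.1 (x0 + (r : ℂ) • (z - x0))) L (2 * η)
    ((differentiable_mvEval q).differentiableOn.sub
      (hfd.mono (hts.trans (hδs.trans inter_subset_left))))
    (fun z hz => by
      have e1 := hp1 z (hts hz)
      have e2 := hq1 z (hts hz)
      have := norm_sub_le_norm_sub_add_norm_sub (mvEval q z) (mvEval p1 z)
        (f.1 (x0 + (r : ℂ) • (z - x0)))
      linarith) z hz
  rw [(goodOp_Dml ℓ).sub hVo (differentiable_mvEval q).differentiableOn hfd (hLV hz)] at h3
  simp only at h3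
  rw [hm ℓ x0 r Ω f.1 hΩo f.2.1 (hLV hz)] at h3
  simp only at h3
  rw [← AinfExt_eqOn f ℓ (hLV hz)] at h3
  have h4 := hr ℓ hℓ z hz
  have h5 := norm_sub_le_norm_sub_add_norm_sub (Dml ℓ (mvEval q) z)
    ((r : ℂ) ^ m ℓ * AinfExt f ℓ (x0 + (r : ℂ) • (z - x0))) (AinfExt f ℓ z)
  have h6 := hCη ℓ hℓ
  linarith

end

section
variable {n : ℕ} {Ω : Set (Fin n → ℂ)}

/-- the defining map of the topology of `A^∞` -/
def Jmap (f : AinfSpace n Ω) (ℓ : Fin n → ℕ) : C(closure Ω, ℂ) :=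
  ⟨(closure Ω).domRestrict (AinfExt f ℓ),
    continuousOn_iff_continuous_domRestrict.mp (AinfExt_continuousOn f ℓ)⟩

lemma Jmap_apply (f : AinfSpace n Ω) (ℓ : Fin n → ℕ) (z : closure Ω) :
    Jmap f ℓ z = AinfExt f ℓ z.1 := rfl

lemma isInducing_Jmap : IsInducing (Jmap (n := n) (Ω := Ω)) := ⟨rfl⟩

lemma AinfExt_unique (f : AinfSpace n Ω) (ℓ : Fin n → ℕ) {g : (Fin n → ℂ) → ℂ}
    (hg : ContinuousOn g (closure Ω)) (he : EqOn g (Dml ℓ f.1) Ω) :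
    EqOn (AinfExt f ℓ) g (closure Ω) :=
  ((AinfExt_eqOn f ℓ).trans he.symm).of_subset_closure (AinfExt_continuousOn f ℓ) hg
    subset_closure subset_rfl

lemma Dml_zero (f : (Fin n → ℂ) → ℂ) : Dml 0 f = f := by
  unfold Dml
  induction List.finRange n with
  | nil => rfl
  | cons i l ih => simpa using ih

lemma Dml_single (i : Fin n) (f : (Fin n → ℂ) → ℂ) : Dml (Pi.single i 1) f = pd i f := by
  have key : ∀ l : List (Fin n), l.Nodup →
      l.foldr (fun j g => (pd j)^[(Pi.single i 1 : Fin n → ℕ) j] g) f =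
        if i ∈ l then pd i f else f := by
    intro l hl
    induction l with
    | nil => rfl
    | cons j l ih =>
      rw [List.nodup_cons] at hl
      rw [List.foldr_cons, ih hl.2]
      by_cases hj : j = i
      · subst hj
        simp [hl.1]
      · simp [hj, Ne.symm hj]
  rw [Dml, key _ (List.nodup_finRange n)]
  simp

/-- gradient to derivative -/
def gradL (n : ℕ) : (Fin n → ℂ) →L[ℂ] ((Fin n → ℂ) →L[ℂ] ℂ) :=
  ∑ i, (ContinuousLinearMap.proj (R := ℂ) (φ := fun _ : Fin n => ℂ) i).smulRight
    (ContinuousLinearMap.proj (R := ℂ) (φ := fun _ : Fin n => ℂ) i)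

lemma gradL_apply (v w : Fin n → ℂ) : gradL n v w = ∑ i, v i * w i := by
  simp [gradL]

lemma fderiv_eq_gradL (f : (Fin n → ℂ) → ℂ) (z : Fin n → ℂ) :
    fderiv ℂ f z = gradL n (fun i => pd i f z) := by
  ext w
  rw [gradL_apply]
  conv_lhs => rw [pi_eq_sum_univ' w]
  simp only [map_sum, map_smul, smul_eq_mul, pd]
  exact Finset.sum_congr rfl fun i _ => mul_comm _ _

lemma isClosed_range_Jmap (hΩo : IsOpen Ω) : IsClosed (range (Jmap (n := n) (Ω := Ω))) := by
  have : LocallyCompactSpace (closure Ω) := isClosed_closure.locallyCompactSpace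
  have : SigmaCompactSpace (closure Ω) := isClosed_closure.sigmaCompactSpace
  apply IsSeqClosed.isClosed
  intro u y hu huy
  choose f hf using hu
  classical
  set F : (Fin n → ℕ) → (Fin n → ℂ) → ℂ := fun ℓ z =>
    if h : z ∈ closure Ω then y ℓ ⟨z, h⟩ else 0 with hF
  have hFv : ∀ ℓ (z : closure Ω), F ℓ z.1 = y ℓ z := fun ℓ z => by simp [hF]
  have hFc : ∀ ℓ, ContinuousOn (F ℓ) (closure Ω) := by
    intro ℓ
    rw [continuousOn_iff_continuous_domRestrict]
    exact (y ℓ).continuous.congr fun z => (hFv ℓ z).symm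
  have hconv : ∀ ℓ (S : Set (Fin n → ℂ)), IsCompact S → S ⊆ Ω →
      TendstoUniformlyOn (fun k => Dml ℓ (f k).1) (F ℓ) atTop S := by
    intro ℓ S hS hSΩ
    have h1 : Tendsto (fun k => u k ℓ) atTop (𝓝 (y ℓ)) := (tendsto_pi_nhds.mp huy) ℓ
    rw [ContinuousMap.tendsto_iff_forall_isCompact_tendstoUniformlyOn] at h1
    have h2 := h1 (Subtype.val ⁻¹' S)
      (isClosed_closure.isClosedEmbedding_subtypeVal.isCompact_preimage hS)
    rw [Metric.tendstoUniformlyOn_iff] at h2 ⊢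
    intro ε hε
    filter_upwards [h2 ε hε] with k hk z hz
    have h3 := hk ⟨z, subset_closure (hSΩ hz)⟩ hz
    rw [← hf k, Jmap_apply, ← hFv] at h3
    rw [← AinfExt_eqOn (f k) ℓ (hSΩ hz)]
    exact h3
  have hdiff : DifferentiableOn ℂ (F 0) Ω := by
    have hloc : TendstoLocallyUniformlyOn (fun k z => fderiv ℂ (f k).1 z)
        (fun z => gradL n (fun i => F (Pi.single i 1) z)) atTop Ω := by
      rw [tendstoLocallyUniformlyOn_iff_forall_isCompact hΩo]
      intro S hSΩ hS
      rw [Metric.tendstoUniformlyOn_iff]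
      intro ε hε
      set c := ε / (‖gradL n‖ + 1) with hc
      have hc0 : 0 < c := by positivity
      have h1 : ∀ᶠ k in atTop, ∀ i, ∀ z ∈ S, dist (F (Pi.single i 1) z) (pd i (f k).1 z) < c := by
        rw [eventually_all]
        intro i
        have := Metric.tendstoUniformlyOn_iff.mp (hconv (Pi.single i 1) S hS hSΩ) c hc0
        simpa only [Dml_single] using this
      filter_upwards [h1] with k hk z hz
      rw [fderiv_eq_gradL, dist_eq_norm, ← map_sub]
      have h2 : ‖(fun i => F (Pi.single i 1) z) - (fun i => pd i (f k).1 z)‖ ≤ c := by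
        rw [pi_norm_le_iff_of_nonneg hc0.le]
        intro i
        have := hk i z hz
        rw [dist_eq_norm] at this
        exact this.le
      calc _ ≤ ‖gradL n‖ * c := (gradL n).le_opNorm_of_le h2
        _ < (‖gradL n‖ + 1) * c := by nlinarith
        _ = ε := by rw [hc]; field_simp
    intro z hz
    refine (hasFDerivAt_of_tendstoLocallyUniformlyOn hΩo hloc
      (f := fun k => (f k).1) ?_ ?_ hz).differentiableAt.differentiableWithinAt
    · intro k x hx
      exact ((f k).2.1.differentiableAt (hΩo.mem_nhds hx)).hasFDerivAt
    · intro x hx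
      have := (hconv 0 {x} isCompact_singleton (by simpa using hx)).tendsto_at (mem_singleton x)
      simpa only [Dml_zero] using this
  have hDF : ∀ ℓ, EqOn (F ℓ) (Dml ℓ (F 0)) Ω := by
    intro ℓ z hz
    obtain ⟨δ, hδ, hball⟩ := Metric.nhds_basis_closedBall.mem_iff.mp (hΩo.mem_nhds hz)
    obtain ⟨C, hC0, hC⟩ := (goodOp_Dml ℓ).cauchy δ hδ
    have ht1 := (hconv ℓ {z} isCompact_singleton (by simpa using hz)).tendsto_at (mem_singleton z)
    refine tendsto_nhds_unique ht1 ?_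
    rw [Metric.tendsto_nhds]
    intro ε hε
    have h1 := Metric.tendstoUniformlyOn_iff.mp
      (hconv 0 _ (isCompact_closedBall z δ) hball) (ε / (C + 1)) (by positivity)
    filter_upwards [h1] with k hk
    have hts : Metric.thickening δ {z} ⊆ Metric.closedBall z δ := by
      rw [Metric.thickening_singleton]; exact Metric.ball_subset_closedBall
    have h2 := hC (fun w => (f k).1 w - F 0 w) {z} (ε / (C + 1))
      (((f k).2.1.sub hdiff).mono (hts.trans hball)) (fun w hw => by
        have := hk w (hts hw)
        rw [Dml_zero, dist_comm, dist_eq_norm] at this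
        exact this.le) z (mem_singleton z)
    rw [(goodOp_Dml ℓ).sub hΩo (f k).2.1 hdiff hz] at h2
    rw [dist_eq_norm]
    refine h2.trans_lt ?_
    rw [mul_div_assoc', div_lt_iff₀ (by positivity)]
    nlinarith
  set G : AinfSpace n Ω := ⟨F 0, hdiff, fun ℓ => ⟨F ℓ, hFc ℓ, hDF ℓ⟩⟩ with hG
  refine ⟨G, ?_⟩
  ext ℓ z
  rw [Jmap_apply, AinfExt_unique G ℓ (hFc ℓ) (hDF ℓ) z.2, hFv]

lemma baireSpace_Ainf (hΩo : IsOpen Ω) : BaireSpace (AinfSpace n Ω) := by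
  have : LocallyCompactSpace (closure Ω) := isClosed_closure.locallyCompactSpace
  have : SigmaCompactSpace (closure Ω) := isClosed_closure.sigmaCompactSpace
  letI u : UniformSpace (AinfSpace n Ω) := UniformSpace.comap Jmap inferInstance
  have hui : IsUniformInducing (Jmap (n := n) (Ω := Ω)) := ⟨rfl⟩
  have : CompleteSpace (AinfSpace n Ω) := by
    rw [completeSpace_iff_isComplete_range hui]
    exact (isClosed_range_Jmap hΩo).isComplete
  have : IsCountablyGenerated (uniformity (AinfSpace n Ω)) := by
    rw [← hui.comap_uniformity]
    infer_instance
  have hb : @BaireSpace (AinfSpace n Ω) u.toTopologicalSpace := inferInstance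
  exact hb

end

section
variable {n : ℕ} {Ω : Set (Fin n → ℂ)}

lemma isOpen_forall_lt {X Y : Type*} [TopologicalSpace X] [TopologicalSpace Y] [CompactSpace Y]
    {g : X × Y → ℝ} (hg : Continuous g) (ε : ℝ) : IsOpen {x | ∀ y, g (x, y) < ε} := by
  rw [isOpen_iff_mem_nhds]
  intro x hx
  have := (isCompact_univ (X := Y)).eventually_forall_of_forall_eventually (x₀ := x)
    (P := fun x y => g (x, y) < ε) (fun y _ => (hg.tendsto (x, y)).eventually_lt_const (hx y))
  filter_upwards [this] with x' hx' y using hx' y (mem_univ y)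

lemma exists_countable_polys {K : Set (Fin n → ℂ)} (hK : IsCompact K) :
    ∃ pj : ℕ → MvPolynomial (Fin n) ℂ, ∀ (P : MvPolynomial (Fin n) ℂ) (ε : ℝ), 0 < ε →
      ∃ j, ∀ z ∈ K, ‖mvEval (pj j) z - mvEval P z‖ < ε := by
  have : CompactSpace K := isCompact_iff_compactSpace.mp hK
  have : Nonempty (range (polyMap K)) := ⟨⟨_, mem_range_self 0⟩⟩
  choose pj hpj using fun j => (TopologicalSpace.denseSeq (range (polyMap K)) j).2
  refine ⟨pj, fun P ε hε => ?_⟩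
  obtain ⟨j, hj⟩ := (TopologicalSpace.denseRange_denseSeq (range (polyMap K))).exists_dist_lt
    ⟨polyMap K P, mem_range_self P⟩ hε
  refine ⟨j, fun z hz => ?_⟩
  rw [Subtype.dist_eq, dist_comm, dist_eq_norm, ← hpj] at hj
  have h5 := (ContinuousMap.norm_coe_le_norm (polyMap K (pj j) - polyMap K P) ⟨z, hz⟩).trans_lt hj
  rw [ContinuousMap.sub_apply, polyMap_apply, polyMap_apply] at h5
  exact h5

/-- A countable family of compact convex sets. -/
def Kfam (n : ℕ) (i : Finset ℕ × ℕ) : Set (Fin n → ℂ) :=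
  Metric.cthickening (1 / ((i.2 : ℝ) + 1))
    (convexHull ℝ ((TopologicalSpace.denseSeq (Fin n → ℂ)) '' (i.1 : Set ℕ)))

lemma Kfam_compact (i : Finset ℕ × ℕ) : IsCompact (Kfam n i) :=
  ((i.1.finite_toSet.image _).isCompact_convexHull ℝ).cthickening

lemma Kfam_convex (i : Finset ℕ × ℕ) : Convex ℝ (Kfam n i) :=
  (convex_convexHull ℝ _).cthickening _

lemma exists_Kfam {K O : Set (Fin n → ℂ)} (hK : IsCompact K) (hKc : Convex ℝ K) (hO : IsOpen O)
    (hKO : K ⊆ O) : ∃ i, K ⊆ Kfam n i ∧ Kfam n i ⊆ O := by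
  obtain ⟨δ, hδ, hδO⟩ := hK.exists_cthickening_subset_open hO hKO
  obtain ⟨m, hm⟩ := exists_nat_one_div_lt (half_pos hδ)
  set r : ℝ := 1 / ((m : ℝ) + 1) with hr
  have hr0 : 0 < r := by positivity
  set D := TopologicalSpace.denseSeq (Fin n → ℂ) with hD
  have hcov : K ⊆ ⋃ a : ℕ, Metric.ball (D a) r := by
    intro z _
    obtain ⟨a, ha⟩ := (TopologicalSpace.denseRange_denseSeq (Fin n → ℂ)).exists_dist_lt z hr0
    exact mem_iUnion.mpr ⟨a, ha⟩
  obtain ⟨t, ht⟩ := hK.elim_finite_subcover _ (fun a => Metric.isOpen_ball) hcov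
  classical
  set T := t.filter (fun a => (Metric.ball (D a) r ∩ K).Nonempty) with hT
  refine ⟨(T, m), ?_, ?_⟩
  · intro z hz
    obtain ⟨a, hat, ha⟩ := mem_iUnion₂.mp (ht hz)
    have haT : a ∈ T := Finset.mem_filter.mpr ⟨hat, z, ha, hz⟩
    exact Metric.mem_cthickening_of_dist_le z (D a) _ _
      (subset_convexHull ℝ _ (mem_image_of_mem _ haT)) (Metric.mem_ball.mp ha).le
  · have h1 : convexHull ℝ (D '' (T : Set ℕ)) ⊆ Metric.cthickening r K := by
      apply convexHull_min _ (hKc.cthickening r)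
      rintro _ ⟨a, ha, rfl⟩
      obtain ⟨-, z, hz, hzK⟩ := Finset.mem_filter.mp ha
      exact Metric.mem_cthickening_of_dist_le (D a) z _ _ hzK (Metric.mem_ball'.mp hz).le
    calc Kfam n (T, m) ⊆ Metric.cthickening r (Metric.cthickening r K) :=
          Metric.cthickening_subset_of_subset r h1
      _ ⊆ Metric.cthickening (r + r) K := Metric.cthickening_cthickening_subset hr0.le hr0.le K
      _ ⊆ Metric.cthickening δ K := Metric.cthickening_mono (by linarith) K
      _ ⊆ O := hδO

/-- The basic sets. -/
def Eset (Ω : Set (Fin n → ℂ)) (Nj : ℕ → Fin n → ℕ) (ζ x0 : Fin n → ℂ) (K : Set (Fin n → ℂ))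
    (P : MvPolynomial (Fin n) ℂ) (s lam : ℕ) : Set (AinfSpace n Ω) :=
  {f | (∀ z ∈ K, ‖pSumExt Nj (AinfExt f) ζ lam z - mvEval P z‖ < 1 / ((s : ℝ) + 1)) ∧
    ∀ a ∈ Finset.range s, ∀ z ∈ closure Ω ∩ Metric.closedBall x0 s,
      ‖Dml (Nj a) (pSumExt Nj (AinfExt f) ζ lam) z - AinfExt f (Nj a) z‖ < 1 / ((s : ℝ) + 1)}

lemma continuous_Jmap : Continuous (Jmap (n := n) (Ω := Ω)) := isInducing_Jmap.continuous

lemma continuous_AinfExt_eval {ζ : Fin n → ℂ} (hζ : ζ ∈ closure Ω) (ℓ : Fin n → ℕ) :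
    Continuous (fun f : AinfSpace n Ω => AinfExt f ℓ ζ) := by
  have h1 : Continuous (fun f : AinfSpace n Ω => Jmap f ℓ) :=
    (continuous_apply ℓ).comp continuous_Jmap
  exact h1.eval_const (⟨ζ, hζ⟩ : closure Ω)

lemma continuous_Dml_pSumExt {ζ : Fin n → ℂ} (hζ : ζ ∈ closure Ω) (Nj : ℕ → Fin n → ℕ)
    (lam : ℕ) (ℓ : Fin n → ℕ) : Continuous (fun q : AinfSpace n Ω × (Fin n → ℂ) =>
      Dml ℓ (pSumExt Nj (AinfExt q.1) ζ lam) q.2) := by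
  simp only [Dml_pSumExt]
  refine continuous_finsetSum _ fun j _ => ?_
  refine ((continuous_AinfExt_eval hζ _).comp continuous_fst).mul (continuous_const.mul ?_)
  rw [Dml_tE]
  exact (differentiable_tE _ _).continuous.comp continuous_snd

lemma isOpen_Eset (Nj : ℕ → Fin n → ℕ) {ζ : Fin n → ℂ} (hζ : ζ ∈ closure Ω) (x0 : Fin n → ℂ)
    {K : Set (Fin n → ℂ)} (hK : IsCompact K) (P : MvPolynomial (Fin n) ℂ) (s lam : ℕ) :
    IsOpen (Eset Ω Nj ζ x0 K P s lam) := by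
  have : LocallyCompactSpace (closure Ω) := isClosed_closure.locallyCompactSpace
  have h1 : IsOpen {f : AinfSpace n Ω | ∀ z ∈ K,
      ‖pSumExt Nj (AinfExt f) ζ lam z - mvEval P z‖ < 1 / ((s : ℝ) + 1)} := by
    have : CompactSpace K := isCompact_iff_compactSpace.mp hK
    have hc : Continuous (fun q : AinfSpace n Ω × K =>
        ‖pSumExt Nj (AinfExt q.1) ζ lam q.2.1 - mvEval P q.2.1‖) := by
      have h2 := continuous_Dml_pSumExt hζ Nj lam 0
      simp only [Dml_zero] at h2
      have h3 : Continuous (fun q : AinfSpace n Ω × K => (q.1, q.2.1)) := by fun_prop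
      exact ((h2.comp h3).sub ((differentiable_mvEval P).continuous.comp
        (continuous_subtype_val.comp continuous_snd))).norm
    have := isOpen_forall_lt hc (1 / ((s : ℝ) + 1))
    simpa only [Subtype.forall] using this
  have h2 : ∀ ℓ, IsOpen {f : AinfSpace n Ω | ∀ z ∈ closure Ω ∩ Metric.closedBall x0 s,
      ‖Dml ℓ (pSumExt Nj (AinfExt f) ζ lam) z - AinfExt f ℓ z‖ < 1 / ((s : ℝ) + 1)} := by
    intro ℓ
    set L := closure Ω ∩ Metric.closedBall x0 (s : ℝ)
    have hL : IsCompact L := (isCompact_closedBall x0 _).inter_left isClosed_closure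
    have : CompactSpace L := isCompact_iff_compactSpace.mp hL
    have hc : Continuous (fun q : AinfSpace n Ω × L =>
        ‖Dml ℓ (pSumExt Nj (AinfExt q.1) ζ lam) q.2.1 - AinfExt q.1 ℓ q.2.1‖) := by
      have h3 : Continuous (fun q : AinfSpace n Ω × L => (q.1, q.2.1)) := by fun_prop
      have h4 : Continuous (fun q : AinfSpace n Ω × L =>
          Jmap q.1 ℓ (⟨q.2.1, q.2.2.1⟩ : closure Ω)) := by
        have h5 : Continuous (fun q : AinfSpace n Ω × L => Jmap q.1 ℓ) :=
          (continuous_apply ℓ).comp (continuous_Jmap.comp continuous_fst)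
        have h6 : Continuous (fun q : AinfSpace n Ω × L => (⟨q.2.1, q.2.2.1⟩ : closure Ω)) := by
          fun_prop
        exact h5.eval h6
      exact (((continuous_Dml_pSumExt hζ Nj lam ℓ).comp h3).sub h4).norm
    have := isOpen_forall_lt hc (1 / ((s : ℝ) + 1))
    simpa only [Subtype.forall] using this
  have h3 := h1.inter (isOpen_biInter_finset (s := Finset.range s) (fun a _ => h2 (Nj a)))
  convert h3 using 1
  ext f
  simp [Eset]

/-- polynomials as elements of `A^∞`. -/
def polyA (Ω : Set (Fin n → ℂ)) (q : MvPolynomial (Fin n) ℂ) : AinfSpace n Ω :=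
  ⟨tE 0 q, (differentiable_tE 0 q).differentiableOn, fun ℓ => ⟨Dml ℓ (tE 0 q), by
    rw [Dml_tE]; exact (differentiable_tE _ _).continuous.continuousOn, fun _ _ => rfl⟩⟩

lemma tE_zero (q : MvPolynomial (Fin n) ℂ) : tE (0 : Fin n → ℂ) q = mvEval q := by
  ext z; simp [tE, mvEval]

lemma AinfExt_polyA (q : MvPolynomial (Fin n) ℂ) (ℓ : Fin n → ℕ) :
    EqOn (AinfExt (polyA Ω q) ℓ) (Dml ℓ (mvEval q)) (closure Ω) := by
  rw [← tE_zero]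
  refine AinfExt_unique _ _ ?_ (fun _ _ => rfl)
  rw [Dml_tE]; exact (differentiable_tE _ _).continuous.continuousOn

lemma dense_Eset {𝕄 : Set ℕ} (h𝕄 : 𝕄.Infinite) (hΩo : IsOpen Ω) (hΩcv : Convex ℝ Ω)
    {Nj : ℕ → Fin n → ℕ} (hNj : Function.Bijective Nj) {ζ : Fin n → ℂ} (hζ : ζ ∈ closure Ω)
    {x0 : Fin n → ℂ} (hx0 : x0 ∈ Ω)
    {K : Set (Fin n → ℂ)} (hK : IsCompact K) (hKc : Convex ℝ K) (hKΩ : K ∩ closure Ω = ∅)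
    (P : MvPolynomial (Fin n) ℂ) (s : ℕ) :
    Dense (⋃ lam ∈ 𝕄, Eset Ω Nj ζ x0 K P s lam) := by
  intro f
  choose q hq1 hq2 using fun k : ℕ => key_approx hΩo hΩcv hx0 f hK hKc hKΩ P
    ((Finset.range k).image Nj) k (ε := 1 / ((k : ℝ) + 1)) (by positivity)
  apply mem_closure_of_tendsto (f := fun k => polyA Ω (q k)) (b := atTop)
  · rw [isInducing_Jmap.tendsto_nhds_iff, tendsto_pi_nhds]
    intro ℓ
    rw [ContinuousMap.tendsto_iff_forall_isCompact_tendstoUniformlyOn]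
    intro S hS
    rw [Metric.tendstoUniformlyOn_iff]
    intro ε hε
    obtain ⟨a, rfl⟩ := hNj.2 ℓ
    obtain ⟨R, hR⟩ := ((hS.image continuous_subtype_val).isBounded).subset_closedBall x0
    obtain ⟨m, hm⟩ := exists_nat_one_div_lt hε
    obtain ⟨R', hR'⟩ := exists_nat_ge R
    filter_upwards [eventually_ge_atTop (max (a + 1) (max m R'))] with k hk z hz
    have hk1 : a + 1 ≤ k := (le_max_left _ _).trans hk
    have hk2 : m ≤ k := (le_max_left _ _).trans ((le_max_right _ _).trans hk)
    have hk3 : R' ≤ k := (le_max_right _ _).trans ((le_max_right _ _).trans hk)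
    have h1 := hq1 k (Nj a) (Finset.mem_image_of_mem _ (Finset.mem_range.mpr (by omega))) z.1
      ⟨z.2, Metric.closedBall_subset_closedBall (hR'.trans (by exact_mod_cast hk3))
        (hR (mem_image_of_mem _ hz))⟩
    simp only [Function.comp_apply]
    rw [Jmap_apply, Jmap_apply, AinfExt_polyA _ _ z.2, dist_comm, dist_eq_norm]
    refine (h1.trans_le ?_).trans hm
    gcongr
  · filter_upwards [eventually_ge_atTop s] with k hk
    obtain ⟨p, hp⟩ := exists_tE ζ (q k)
    obtain ⟨lam0, hlam0⟩ := pSumExt_poly Nj hNj ζ p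
    obtain ⟨lam, hlam, hlt⟩ := h𝕄.exists_gt lam0
    have hS := hlam0 lam hlt.le (AinfExt (polyA Ω (q k)))
      (fun ℓ => by rw [AinfExt_polyA _ _ hζ, hp])
    rw [hp] at hS
    refine mem_iUnion₂.mpr ⟨lam, hlam, ?_, ?_⟩
    · intro z hz
      rw [hS]
      refine (hq2 k z hz).trans_le ?_
      gcongr
    · intro a _ z hz
      rw [hS, AinfExt_polyA _ _ hz.1, sub_self, norm_zero]
      positivity

end

/-- Theorem 3.3: universal Taylor series in `A^∞(Ω)` with center
`ζ` in the closure of `Ω`; the set of universal functions is a nonempty dense `G_δ`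
subset of `A^∞(Ω)`. -/
theorem thm3_3 (n : ℕ) (𝕄 : Set ℕ) (h𝕄 : 𝕄.Infinite)
    (Ω : Set (Fin n → ℂ)) (hΩo : IsOpen Ω) (hΩcv : Convex ℝ Ω)
    (ζ : Fin n → ℂ) (hζ : ζ ∈ closure Ω)
    (Nj : ℕ → Fin n → ℕ) (hNj : Function.Bijective Nj) :
    ∃ U : Set (AinfSpace n Ω),
      U = {f : AinfSpace n Ω |
        ∀ K : Set (Fin n → ℂ), IsCompact K → Convex ℝ K → K ∩ closure Ω = ∅ →
          ∀ P : MvPolynomial (Fin n) ℂ, ∃ lam : ℕ → ℕ, (∀ N, lam N ∈ 𝕄) ∧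
            TendstoUniformlyOn (fun N => pSumExt Nj (AinfExt f) ζ (lam N)) (mvEval P)
              atTop K ∧
            ∀ ℓ : Fin n → ℕ, ∀ L : Set (Fin n → ℂ), L ⊆ closure Ω → IsCompact L →
              TendstoUniformlyOn (fun N => Dml ℓ (pSumExt Nj (AinfExt f) ζ (lam N)))
                (AinfExt f ℓ) atTop L} ∧
      U.Nonempty ∧ Dense U ∧ IsGδ U := by
  obtain ⟨x0, hx0⟩ : Ω.Nonempty := closure_nonempty_iff.mp ⟨ζ, hζ⟩
  have hbaire : BaireSpace (AinfSpace n Ω) := baireSpace_Ainf hΩo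
  choose pj hpj using fun i : Finset ℕ × ℕ => exists_countable_polys (Kfam_compact (n := n) i)
  set I := {i : Finset ℕ × ℕ // Kfam n i ∩ closure Ω = ∅} × ℕ × ℕ with hI
  set G : I → Set (AinfSpace n Ω) := fun t =>
    ⋃ lam ∈ 𝕄, Eset Ω Nj ζ x0 (Kfam n t.1.1) (pj t.1.1 t.2.1) t.2.2 lam with hG
  have hGo : ∀ t, IsOpen (G t) := fun t =>
    isOpen_biUnion fun lam _ => isOpen_Eset Nj hζ x0 (Kfam_compact _) _ _ _
  have hGd : ∀ t, Dense (G t) := fun t =>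
    dense_Eset h𝕄 hΩo hΩcv hNj hζ hx0 (Kfam_compact _) (Kfam_convex _) t.1.2 _ _
  have hdense : Dense (⋂ t, G t) := dense_iInter_of_isOpen hGo hGd
  have hne : (⋂ t, G t).Nonempty := by
    have : Nonempty (AinfSpace n Ω) := ⟨polyA Ω 0⟩
    exact hdense.nonempty
  refine ⟨⋂ t, G t, ?_, hne, hdense, IsGδ.iInter_of_isOpen hGo⟩
  ext f
  simp only [mem_iInter, mem_ofPred_eq]
  constructor
  · intro hf K hK hKc hKΩ P
    obtain ⟨i, hKi, hiΩ⟩ := exists_Kfam hK hKc isClosed_closure.isOpen_compl (O := (closure Ω)ᶜ)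
      (fun z hz hz2 => by
        have : z ∈ K ∩ closure Ω := ⟨hz, hz2⟩
        rw [hKΩ] at this
        exact this)
    have hi : Kfam n i ∩ closure Ω = ∅ := by
      rw [← disjoint_iff_inter_eq_empty, ← subset_compl_iff_disjoint_right]
      exact hiΩ
    choose j hj using fun N : ℕ => hpj i P (1 / ((N : ℝ) + 1)) (by positivity)
    have hex : ∀ N : ℕ, ∃ lam ∈ 𝕄, f ∈ Eset Ω Nj ζ x0 (Kfam n i) (pj i (j N)) N lam := by
      intro N
      have := hf (⟨i, hi⟩, j N, N)
      simpa only [hG, mem_iUnion, exists_prop] using this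
    choose lam hlam hE using hex
    refine ⟨lam, hlam, ?_, ?_⟩
    · rw [Metric.tendstoUniformlyOn_iff]
      intro ε hε
      obtain ⟨m, hm⟩ := exists_nat_one_div_lt (half_pos hε)
      filter_upwards [eventually_ge_atTop m] with N hN z hz
      have h1 := (hE N).1 z (hKi hz)
      have h2 := hj N z (hKi hz)
      have h3 : 1 / ((N : ℝ) + 1) ≤ 1 / ((m : ℝ) + 1) := by gcongr
      rw [dist_comm, dist_eq_norm]
      have h4 := norm_sub_le_norm_sub_add_norm_sub (pSumExt Nj (AinfExt f) ζ (lam N) z)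
        (mvEval (pj i (j N)) z) (mvEval P z)
      linarith
    · intro ℓ L hLΩ hL
      rw [Metric.tendstoUniformlyOn_iff]
      intro ε hε
      obtain ⟨a, rfl⟩ := hNj.2 ℓ
      obtain ⟨R, hR⟩ := hL.isBounded.subset_closedBall x0
      obtain ⟨m, hm⟩ := exists_nat_one_div_lt hε
      obtain ⟨R', hR'⟩ := exists_nat_ge R
      filter_upwards [eventually_ge_atTop (max (a + 1) (max m R'))] with k hk z hz
      have hk1 : a + 1 ≤ k := (le_max_left _ _).trans hk
      have hk2 : m ≤ k := (le_max_left _ _).trans ((le_max_right _ _).trans hk)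
      have hk3 : R' ≤ k := (le_max_right _ _).trans ((le_max_right _ _).trans hk)
      have h1 := (hE k).2 a (Finset.mem_range.mpr (by omega)) z
        ⟨hLΩ hz, Metric.closedBall_subset_closedBall (hR'.trans (by exact_mod_cast hk3)) (hR hz)⟩
      rw [dist_comm, dist_eq_norm]
      refine (h1.trans_le ?_).trans hm
      gcongr
  · rintro hf ⟨⟨i, hi⟩, j, s⟩
    obtain ⟨lam, hlam, h1, h2⟩ := hf (Kfam n i) (Kfam_compact i) (Kfam_convex i) hi (pj i j)
    have hs : (0 : ℝ) < 1 / ((s : ℝ) + 1) := by positivity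
    have e1 := Metric.tendstoUniformlyOn_iff.mp h1 _ hs
    have e2 : ∀ᶠ N in atTop, ∀ a ∈ Finset.range s, ∀ z ∈ closure Ω ∩ Metric.closedBall x0 (s : ℝ),
        dist (AinfExt f (Nj a) z) (Dml (Nj a) (pSumExt Nj (AinfExt f) ζ (lam N)) z) <
          1 / ((s : ℝ) + 1) := by
      rw [eventually_all_finset]
      intro a _
      exact Metric.tendstoUniformlyOn_iff.mp (h2 (Nj a) _ inter_subset_left
        ((isCompact_closedBall x0 _).inter_left isClosed_closure)) _ hs
    obtain ⟨N, hN1, hN2⟩ := (e1.and e2).exists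
    refine mem_iUnion₂.mpr ⟨lam N, hlam N, ?_, ?_⟩
    · intro z hz
      rw [← dist_eq_norm, dist_comm]
      exact hN1 z hz
    · intro a ha z hz
      rw [← dist_eq_norm, dist_comm]
      exact hN2 a ha z hz

end
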